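/- arXiv:2103.11158 — 3 statements merged into one kernel-verified Lean document; each statement's English description precedes it below -/
import Mathlib

section
/- A group S is discrete p-toral (i.e., has a normal subgroup S₀ isomorphic to a finite direct product of copies of ℤ/p^∞ with S/S₀ a finite p-group) if and only if S is artinian (every descending chain of subgroups stabilizes) and every finitely generated subgroup of S is a finite p-group. -/
/-- ℚ/ℤ as an additive group. -/
abbrev QmodZ : Type := ℚ ⧸ AddSubgroup.zmultiples (1 : ℚ)

/-- The Prüfer p-group ℤ/p^∞, realized as the p-primary component of ℚ/ℤ,
written multiplicatively. -/
def Prufer (p : ℕ) [Fact p.Prime] : Type :=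
  Multiplicative (AddCommGroup.primaryComponent QmodZ p)

instance (p : ℕ) [Fact p.Prime] : CommGroup (Prufer p) :=
  Multiplicative.commGroup

/-- A group `S` is *discrete p-toral* if it has a normal subgroup `S₀` isomorphic to a
finite direct product of copies of `ℤ/p^∞` such that `S/S₀` is a finite `p`-group. -/
def IsDiscretePToral (p : ℕ) [Fact p.Prime] (S : Type*) [Group S] : Prop :=
  ∃ S₀ : Subgroup S, ∃ _ : S₀.Normal,
    (∃ r : ℕ, Nonempty (S₀ ≃* (Fin r → Prufer p))) ∧
    Finite (S ⧸ S₀) ∧ IsPGroup p (S ⧸ S₀)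

/-- A group is artinian if every descending sequence of subgroups is eventually constant. -/
def SubgroupArtinian (S : Type*) [Group S] : Prop :=
  ∀ f : ℕ → Subgroup S, (∀ n, f (n + 1) ≤ f n) → ∃ n, ∀ m, n ≤ m → f m = f n

theorem subgroupArtinian_iff_wellFoundedLT (G : Type*) [Group G] :
    SubgroupArtinian G ↔ WellFoundedLT (Subgroup G) := by
  rw [← wellFoundedGT_dual_iff, wellFoundedGT_iff_monotone_chain_condition]
  constructor
  · intro h a
    obtain ⟨n, hn⟩ := h (fun n => OrderDual.ofDual (a n)) fun n => a.monotone n.le_succ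
    exact ⟨n, fun m hm => (hn m hm).symm⟩
  · intro h f hf
    obtain ⟨n, hn⟩ := h ⟨fun n => OrderDual.toDual (f n), monotone_nat_of_le_succ hf⟩
    exact ⟨n, fun m hm => (hn m hm).symm⟩

section WellFounded

variable {G G' : Type*} [Group G] [Group G']

theorem wellFoundedLT_subgroup_of_injective [WellFoundedLT (Subgroup G')] (f : G →* G')
    (hf : Function.Injective f) : WellFoundedLT (Subgroup G) :=
  StrictMono.wellFoundedLT (f := Subgroup.map f) fun _ _ =>
    (Subgroup.map_lt_map_iff_of_injective hf).2

theorem wellFoundedLT_subgroup_of_surjective [WellFoundedLT (Subgroup G)] (f : G →* G')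
    (hf : Function.Surjective f) : WellFoundedLT (Subgroup G') :=
  StrictMono.wellFoundedLT (f := Subgroup.comap f) fun _ _ =>
    (Subgroup.comap_lt_comap_of_surjective hf).2

/-- The minimal condition on subgroups is inherited by extensions. -/
theorem wellFoundedLT_subgroup_of_ker_range (f : G →* G') [WellFoundedLT (Subgroup f.ker)]
    [WellFoundedLT (Subgroup G')] : WellFoundedLT (Subgroup G) := by
  have hmono : StrictMono fun H : Subgroup G => (H.subgroupOf f.ker, H.map f) := by
    intro H K hHK
    refine lt_of_le_of_ne ⟨Subgroup.comap_mono hHK.le, Subgroup.map_mono hHK.le⟩ fun h => ?_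
    rw [Prod.mk.injEq] at h
    refine hHK.not_ge fun x hx => ?_
    obtain ⟨y, hy, hyx⟩ : f x ∈ H.map f := h.2 ▸ Subgroup.mem_map_of_mem f hx
    have hker : y⁻¹ * x ∈ f.ker := by simp [MonoidHom.mem_ker, hyx]
    have hmem : (⟨y⁻¹ * x, hker⟩ : f.ker) ∈ H.subgroupOf f.ker := by
      rw [h.1]
      exact K.mul_mem (K.inv_mem (hHK.le hy)) hx
    simpa using H.mul_mem hy hmem
  exact hmono.wellFoundedLT

theorem wellFoundedLT_subgroup_pi [WellFoundedLT (Subgroup G)] (r : ℕ) :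
    WellFoundedLT (Subgroup (Fin r → G)) := by
  induction r with
  | zero => infer_instance
  | succ r ih =>
    let f : (Fin (r + 1) → G) →* (Fin r → G) :=
      { toFun := fun x i => x i.succ, map_one' := rfl, map_mul' := fun _ _ => rfl }
    have : WellFoundedLT (Subgroup f.ker) := by
      refine wellFoundedLT_subgroup_of_injective
        ((Pi.evalMonoidHom (fun _ : Fin (r + 1) => G) 0).comp f.ker.subtype) fun x y hxy => ?_
      ext i
      refine Fin.cases hxy (fun j => ?_) i
      exact (congrFun x.2 j).trans (congrFun y.2 j).symm
    exact wellFoundedLT_subgroup_of_ker_range f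

end WellFounded

section Abelian

variable {p : ℕ} [Fact p.Prime] {A : Type*} [CommGroup A]

/-- An elementary abelian `p`-group with the minimal condition on subgroups is finite. -/
theorem finite_of_wellFoundedLT_of_pow_eq_one [WellFoundedLT (Subgroup A)]
    (h : ∀ a : A, a ^ p = 1) : Finite A := by
  let : Module (ZMod p) (Additive A) := AddCommGroup.zmodModule (n := p) h
  have hmono : StrictMono fun M : Submodule (ZMod p) (Additive A) =>
      AddSubgroup.toSubgroup' M.toAddSubgroup :=
    (OrderIso.strictMono _).comp Submodule.toAddSubgroup_strictMono
  have : IsArtinian (ZMod p) (Additive A) := hmono.wellFoundedLT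
  have : Module.Finite (ZMod p) (Additive A) :=
    (IsSemisimpleModule.finite_tfae.out 2 0).mp this
  exact Finite.of_equiv _ (Additive.toMul (α := A)) (h := Module.finite_of_finite (ZMod p))

theorem exists_pow_eq_of_finiteIndex_eq_top [WellFoundedLT (Subgroup A)]
    (hA : ∀ H : Subgroup A, H.FiniteIndex → H = ⊤) (a : A) : ∃ b : A, b ^ p = a := by
  let R := (powMonoidHom p : A →* A).range
  have : WellFoundedLT (Subgroup (A ⧸ R)) :=
    wellFoundedLT_subgroup_of_surjective _ (QuotientGroup.mk'_surjective R)
  have : Finite (A ⧸ R) := finite_of_wellFoundedLT_of_pow_eq_one (p := p) fun x => by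
    induction x using QuotientGroup.induction_on with
    | H x => exact (QuotientGroup.eq_one_iff _).2 ⟨x, rfl⟩
  have ha : a ∈ R := hA R Subgroup.finiteIndex_of_finite_quotient ▸ Subgroup.mem_top a
  exact ha

/-- Elementary abelian `p`-groups of the same finite order are isomorphic. -/
theorem nonempty_mulEquiv_of_pow_eq_one {B : Type*} [CommGroup B] [Finite A] [Finite B]
    (hA : ∀ a : A, a ^ p = 1) (hB : ∀ b : B, b ^ p = 1) (h : Nat.card A = Nat.card B) :
    Nonempty (A ≃* B) := by
  let : Module (ZMod p) (Additive A) := AddCommGroup.zmodModule (n := p) hA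
  let : Module (ZMod p) (Additive B) := AddCommGroup.zmodModule (n := p) hB
  have hAB : Module.finrank (ZMod p) (Additive A) = Module.finrank (ZMod p) (Additive B) := by
    have h1 := Module.natCard_eq_pow_finrank (K := ZMod p) (V := Additive A)
    have h2 := Module.natCard_eq_pow_finrank (K := ZMod p) (V := Additive B)
    rw [Nat.card_zmod] at h1 h2
    exact Nat.pow_right_injective (Fact.out : p.Prime).two_le (h1.symm.trans (h.trans h2))
  obtain ⟨e⟩ := FiniteDimensional.nonempty_linearEquiv_of_finrank_eq hAB
  exact ⟨MulEquiv.toAdditive.symm e.toAddEquiv⟩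

theorem exists_zpow_eq_of_isPGroup (hp : IsPGroup p A) (hdiv : ∀ a : A, ∃ b : A, b ^ p = a)
    {n : ℤ} (hn : n ≠ 0) (a : A) : ∃ b : A, b ^ n = a := by
  have hpow : ∀ (k : ℕ) (a : A), ∃ b : A, b ^ p ^ k = a := by
    intro k
    induction k with
    | zero => exact fun a => ⟨a, by simp⟩
    | succ k ih =>
      intro a
      obtain ⟨b, rfl⟩ := hdiv a
      obtain ⟨c, rfl⟩ := ih b
      exact ⟨c, by rw [pow_succ, pow_mul]⟩
  obtain ⟨k, m, hm, hkm⟩ := Nat.exists_eq_pow_mul_and_not_dvd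
    (Int.natAbs_ne_zero.2 hn) p (Fact.out : p.Prime).ne_one
  obtain ⟨b, rfl⟩ := hpow k a
  have hcop : p.Coprime m := ((Fact.out : p.Prime).coprime_iff_not_dvd).2 hm
  obtain ⟨c, rfl⟩ := (hp.powEquiv hcop).surjective b
  rw [IsPGroup.powEquiv_apply, ← pow_mul, mul_comm, ← hkm]
  rcases Int.natAbs_eq n with h | h
  · exact ⟨c, by rw [← zpow_natCast, ← h]⟩
  · exact ⟨c⁻¹, by rw [← zpow_natCast, inv_zpow', ← neg_eq_iff_eq_neg.2 h]⟩

/-- A homomorphism to a divisible abelian group extends from a subgroup. -/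
theorem exists_monoidHom_extending {B : Type*} [CommGroup B]
    (hB : ∀ n : ℤ, n ≠ 0 → ∀ b : B, ∃ c : B, c ^ n = b) (H : Subgroup A) (f : H →* B) :
    ∃ g : A →* B, ∀ x : H, g x = f x := by
  let : DivisibleBy (Additive B) ℤ := divisibleByOfSMulRightSurj _ _
    fun {n} hn b => hB n hn b
  obtain ⟨g, hg⟩ := (Module.Baer.of_divisible (Additive B)).extension_property_addMonoidHom
    (MonoidHom.toAdditive H.subtype) Subtype.val_injective (MonoidHom.toAdditive f)
  exact ⟨MonoidHom.toAdditive.symm g, fun x => DFunLike.congr_fun hg x⟩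

/-- Divisible abelian `p`-groups with isomorphic `p`-torsion are isomorphic. -/
theorem nonempty_mulEquiv_of_ker_powMonoidHom {B : Type*} [CommGroup B]
    (hA : IsPGroup p A) (hB : IsPGroup p B) (hAdiv : ∀ a : A, ∃ b : A, b ^ p = a)
    (hBdiv : ∀ a : B, ∃ b : B, b ^ p = a)
    (e : (powMonoidHom p : A →* A).ker ≃* (powMonoidHom p : B →* B).ker) :
    Nonempty (A ≃* B) := by
  obtain ⟨g, hg⟩ := exists_monoidHom_extending
    (fun n hn => exists_zpow_eq_of_isPGroup hB hBdiv hn) _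
    ((powMonoidHom p : B →* B).ker.subtype.comp e.toMonoidHom)
  refine ⟨MulEquiv.ofBijective g ⟨(injective_iff_map_eq_one g).2 fun a ha => ?_, fun b => ?_⟩⟩
  · obtain ⟨k, hk⟩ := hA a
    induction k generalizing a with
    | zero => simpa using hk
    | succ k ih =>
      have hap : a ^ p = 1 := ih _ (by simp [ha]) (by rw [← pow_mul, ← pow_succ', hk])
      have h1 : e ⟨a, hap⟩ = 1 := Subtype.ext ((hg ⟨a, hap⟩).symm.trans ha)
      simpa using congrArg Subtype.val ((map_eq_one_iff e e.injective).1 h1)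
  · obtain ⟨k, hk⟩ := hB b
    induction k generalizing b with
    | zero => exact ⟨1, by simpa using hk.symm⟩
    | succ k ih =>
      obtain ⟨a, ha⟩ := ih (b ^ p) (by rw [← pow_mul, ← pow_succ', hk])
      obtain ⟨c, rfl⟩ := hAdiv a
      have hbc : b / g c ∈ (powMonoidHom p : B →* B).ker := by
        rw [MonoidHom.mem_ker, powMonoidHom_apply, div_pow, ← map_pow, ha, div_self']
      refine ⟨e.symm ⟨b / g c, hbc⟩ * c, ?_⟩
      rw [map_mul, hg]
      simp

end Abelian

section LocallyFinite

open scoped commutatorElement IsMulCommutative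

variable {p : ℕ} {G G' : Type*} [Group G] [Group G']

theorem isPGroup_of_forall_fg (hG : ∀ H : Subgroup G, H.FG → Finite H ∧ IsPGroup p H) :
    IsPGroup p G := fun g => by
  obtain ⟨k, hk⟩ := (hG (Subgroup.zpowers g) ⟨{g}, by simp [Subgroup.zpowers_eq_closure]⟩).2
    ⟨g, Subgroup.mem_zpowers g⟩
  exact ⟨k, congrArg Subtype.val hk⟩

theorem forall_fg_finite_isPGroup_of_injective
    (hG : ∀ H : Subgroup G', H.FG → Finite H ∧ IsPGroup p H) (f : G →* G')
    (hf : Function.Injective f) (H : Subgroup G) (hH : H.FG) : Finite H ∧ IsPGroup p H := by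
  obtain ⟨hfin, hp⟩ := hG (H.map f) <| by
    have := (Group.fg_iff_subgroup_fg H).2 hH
    exact (Group.fg_iff_subgroup_fg _).1 (Group.fg_of_surjective (f.subgroupMap_surjective H))
  let e := H.equivMapOfInjective f hf
  exact ⟨Finite.of_equiv _ e.symm.toEquiv, hp.of_equiv e.symm⟩

theorem forall_fg_finite_isPGroup_of_surjective
    (hG : ∀ H : Subgroup G, H.FG → Finite H ∧ IsPGroup p H) (f : G →* G')
    (hf : Function.Surjective f) (H : Subgroup G') (hH : H.FG) : Finite H ∧ IsPGroup p H := by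
  obtain ⟨s, rfl⟩ := hH
  obtain ⟨t, ht⟩ := Set.Finite.exists_finset_coe (s.finite_toSet.image (Function.surjInv hf))
  have hmap : (Subgroup.closure (t : Set G)).map f = Subgroup.closure s := by
    rw [MonoidHom.map_closure, ht, Set.image_image]
    simp [Function.surjInv_eq]
  obtain ⟨hfin, hp⟩ := hG (Subgroup.closure t) ⟨t, rfl⟩
  have hsurj := f.subgroupMap_surjective (Subgroup.closure (t : Set G))
  rw [← hmap]
  exact ⟨Finite.of_surjective _ hsurj, hp.of_surjective _ hsurj⟩

/-- An element of a normal closure only involves finitely many conjugates. -/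
theorem exists_finset_of_mem_normalClosure {a b : G} (ha : a ∈ Subgroup.normalClosure {b}) :
    ∃ F : Finset G, ∀ K : Subgroup G, (∀ g ∈ F, g * b * g⁻¹ ∈ K) → a ∈ K := by
  classical
  induction ha using Subgroup.closure_induction with
  | mem x hx =>
    obtain ⟨c, hc, hcx⟩ := Group.mem_conjugatesOfSet_iff.1 hx
    obtain rfl := Set.mem_singleton_iff.1 hc
    obtain ⟨g, rfl⟩ := isConj_iff.1 hcx
    exact ⟨{g}, fun K hK => hK g (Finset.mem_singleton_self g)⟩
  | one => exact ⟨∅, fun K _ => K.one_mem⟩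
  | mul x y _ _ hx hy =>
    obtain ⟨F, hF⟩ := hx
    obtain ⟨F', hF'⟩ := hy
    exact ⟨F ∪ F', fun K hK => K.mul_mem
      (hF K fun g hg => hK g (Finset.mem_union_left _ hg))
      (hF' K fun g hg => hK g (Finset.mem_union_right _ hg))⟩
  | inv x _ hx =>
    obtain ⟨F, hF⟩ := hx
    exact ⟨F, fun K hK => K.inv_mem (hF K hK)⟩

theorem isPGroup_of_isPGroup_quotient (N : Subgroup G) [N.Normal] (hN : IsPGroup p N)
    (hQ : IsPGroup p (G ⧸ N)) : IsPGroup p G := fun g => by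
  obtain ⟨k, hk⟩ := hQ g
  have hmem : g ^ p ^ k ∈ N := (QuotientGroup.eq_one_iff _).1 hk
  obtain ⟨l, hl⟩ := hN ⟨_, hmem⟩
  exact ⟨k + l, by rw [pow_add, pow_mul]; exact congrArg Subtype.val hl⟩

variable [Fact p.Prime]

/-- In a locally finite `p`-group, a nontrivial element never lies in the normal closure of one of
its commutators. -/
theorem eq_one_of_mem_normalClosure_commutator
    (hG : ∀ H : Subgroup G, H.FG → Finite H ∧ IsPGroup p H) {a g : G}
    (ha : a ∈ Subgroup.normalClosure {⁅a, g⁆}) : a = 1 := by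
  classical
  obtain ⟨F, hF⟩ := exists_finset_of_mem_normalClosure ha
  let H := Subgroup.closure ((insert a (insert g F) : Finset G) : Set G)
  have hmem : ∀ x ∈ insert a (insert g F), x ∈ H := fun x hx => Subgroup.subset_closure hx
  obtain ⟨hfin, hp⟩ := hG H ⟨_, rfl⟩
  obtain ⟨n, hn⟩ := (Subgroup.isNilpotent_iff_lowerCentralSeries H).1 hp.isNilpotent
  have hmem_lcs : ∀ m, a ∈ H.lowerCentralSeries m := by
    intro m
    induction m with
    | zero => exact hmem a (by simp)
    | succ m ih =>
      refine hF _ fun x hx => ?_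
      refine (Subgroup.mem_normalizer_iff.1
        (H.self_le_normalizer_lowerCentralSeries (m + 1) (hmem x (by simp [hx]))) _).1 ?_
      exact Subgroup.commutator_mem_commutator ih (hmem g (by simp))
  simpa [hn] using hmem_lcs n

/-- A nontrivial locally finite `p`-group with the minimal condition has nontrivial center. -/
theorem center_ne_bot_of_wellFoundedLT [Nontrivial G] [WellFoundedLT (Subgroup G)]
    (hG : ∀ H : Subgroup G, H.FG → Finite H ∧ IsPGroup p H) : Subgroup.center G ≠ ⊥ := by
  obtain ⟨N, ⟨hN, hNbot⟩, hmin⟩ := wellFounded_lt.has_min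
    {N : Subgroup G | N.Normal ∧ N ≠ ⊥} ⟨⊤, inferInstance, top_ne_bot⟩
  refine ne_bot_of_le_ne_bot hNbot fun a ha => Subgroup.mem_center_iff.2 fun g => ?_
  by_contra hag
  have hne : ⁅a, g⁆ ≠ 1 := fun h => hag (commutatorElement_eq_one_iff_mul_comm.1 h).symm
  have hle : Subgroup.normalClosure {⁅a, g⁆} ≤ N := Subgroup.normalClosure_le_normal <|
    Set.singleton_subset_iff.2 <| Subgroup.commutator_le_left N ⊤ <|
      Subgroup.commutator_mem_commutator ha (Subgroup.mem_top g)
  have hbot : Subgroup.normalClosure {⁅a, g⁆} ≠ ⊥ := fun h => hne <| by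
    simpa [h] using Subgroup.subset_normalClosure (Set.mem_singleton ⁅a, g⁆)
  have heq := eq_of_le_of_not_lt hle (hmin _ ⟨inferInstance, hbot⟩)
  have := eq_one_of_mem_normalClosure_commutator hG (heq.symm ▸ ha)
  simp [this] at hne

theorem monoidHom_eq_one_of_pow_eq_one {A : Type*} [CommGroup A] [WellFoundedLT (Subgroup G)]
    (hindex : ∀ H : Subgroup G, H.FiniteIndex → H = ⊤) (f : G →* A) {k : ℕ}
    (hf : ∀ g, f g ^ p ^ k = 1) (g : G) : f g = 1 := by
  let φ := f.rangeRestrict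
  have hφ : Function.Surjective φ := f.rangeRestrict_surjective
  have : WellFoundedLT (Subgroup f.range) := wellFoundedLT_subgroup_of_surjective φ hφ
  have hdiv := exists_pow_eq_of_finiteIndex_eq_top (p := p) (A := f.range) fun H hH =>
    Subgroup.comap_injective hφ <|
      (hindex (H.comap φ) ⟨by rw [H.index_comap_of_surjective hφ]; exact hH.1⟩).trans
        (Subgroup.comap_top φ).symm
  have hpow : ∀ y : f.range, y ^ p ^ k = 1 := by
    rintro ⟨_, x, rfl⟩
    exact Subtype.ext (hf x)
  obtain ⟨y, hy⟩ := exists_zpow_eq_of_isPGroup (fun y => ⟨k, hpow y⟩) hdiv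
    (n := (p ^ k : ℕ)) (by simp [(Fact.out : p.Prime).ne_zero]) (φ g)
  rw [zpow_natCast, hpow] at hy
  exact (congrArg Subtype.val hy).symm

theorem pow_mul_eq_of_commutator_mem_center {x t : G} (h : ⁅x, t⁆ ∈ Subgroup.center G) (n : ℕ) :
    x ^ n * t = ⁅x, t⁆ ^ n * t * x ^ n := by
  induction n with
  | zero => simp
  | succ n ih =>
    have hxt : x * t = ⁅x, t⁆ * t * x := by simp [commutatorElement_def]
    calc x ^ (n + 1) * t = x ^ n * (x * t) := by rw [pow_succ, mul_assoc]
      _ = ⁅x, t⁆ * (x ^ n * t) * x := by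
        rw [hxt, ← mul_assoc, ← mul_assoc, Subgroup.mem_center_iff.1 h, ← mul_assoc]
      _ = ⁅x, t⁆ ^ (n + 1) * t * x ^ (n + 1) := by
        rw [ih, pow_succ', pow_succ]
        simp only [mul_assoc]

/-- A locally finite `p`-group with the minimal condition on subgroups and without proper
subgroups of finite index is abelian. -/
theorem center_eq_top_of_finiteIndex_eq_top [WellFoundedLT (Subgroup G)]
    (hG : ∀ H : Subgroup G, H.FG → Finite H ∧ IsPGroup p H)
    (hindex : ∀ H : Subgroup G, H.FiniteIndex → H = ⊤) : Subgroup.center G = ⊤ := by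
  by_contra hZ
  let Z := Subgroup.center G
  have hsurj := QuotientGroup.mk'_surjective Z
  have : WellFoundedLT (Subgroup (G ⧸ Z)) := wellFoundedLT_subgroup_of_surjective _ hsurj
  have : Nontrivial (G ⧸ Z) := QuotientGroup.nontrivial_iff.2 hZ
  obtain ⟨⟨q, hq⟩, hq1⟩ := Subgroup.ne_bot_iff_exists_ne_one.1
    (center_ne_bot_of_wellFoundedLT (forall_fg_finite_isPGroup_of_surjective hG _ hsurj))
  obtain ⟨x, rfl⟩ := hsurj q
  have hcomm : ∀ t, ⁅x, t⁆ ∈ Z := fun t => by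
    rw [← QuotientGroup.ker_mk' Z, MonoidHom.mem_ker, map_commutatorElement,
      commutatorElement_eq_one_iff_mul_comm]
    exact (Subgroup.mem_center_iff.1 hq _).symm
  let f : G →* Subgroup.center G := .mk' (fun t => ⟨⁅x, t⁆, hcomm t⟩) fun s t => Subtype.ext <| by
    change ⁅x, s * t⁆ = ⁅x, s⁆ * ⁅x, t⁆
    rw [commutatorElement_mul_right_eq_mul_conj, mul_assoc ⁅x, s⁆,
      Subgroup.mem_center_iff.1 (hcomm t), ← mul_assoc, mul_inv_cancel_right]
  obtain ⟨k, hk⟩ := isPGroup_of_forall_fg hG x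
  have hpow : ∀ t : G, ⁅x, t⁆ ^ p ^ k = 1 := fun t => by
    simpa [hk] using pow_mul_eq_of_commutator_mem_center (hcomm t) (p ^ k)
  have hfpow : ∀ t, f t ^ p ^ k = 1 := fun t => Subtype.ext (hpow t)
  have hx : x ∈ Z := Subgroup.mem_center_iff.2 fun t => by
    have hf : f t = 1 := 
      monoidHom_eq_one_of_pow_eq_one (A := Subgroup.center G) hindex f hfpow t
    exact (commutatorElement_eq_one_iff_mul_comm.1 (congrArg Subtype.val hf)).symm
  exact hq1 (Subtype.ext ((QuotientGroup.eq_one_iff x).2 hx))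

/-- The minimal condition on subgroups yields a least subgroup of finite index. -/
theorem exists_normal_finiteIndex_le [WellFoundedLT (Subgroup G)] :
    ∃ N : Subgroup G, N.Normal ∧ N.FiniteIndex ∧ ∀ H : Subgroup G, H.FiniteIndex → N ≤ H := by
  obtain ⟨N, hN, hmin⟩ := wellFounded_lt.has_min
    {N : Subgroup G | N.FiniteIndex} ⟨⊤, inferInstanceAs (⊤ : Subgroup G).FiniteIndex⟩
  have hN : N.FiniteIndex := hN
  have hle : ∀ H : Subgroup G, H.FiniteIndex → N ≤ H := fun H hH =>
    inf_eq_left.1 <| eq_of_le_of_not_lt inf_le_left (hmin _ (inferInstanceAs (N ⊓ H).FiniteIndex))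
  refine ⟨N, ?_, hN, hle⟩
  rw [← le_antisymm N.normalCore_le (hle _ inferInstance)]
  infer_instance

end LocallyFinite

namespace Prufer

variable (p : ℕ) [Fact p.Prime]

/-- The class of `1 / p ^ k` in the Prüfer group. -/
noncomputable def root (k : ℕ) : Prufer p :=
  Multiplicative.ofAdd ⟨(((1 : ℚ) / p ^ k : ℚ) : QmodZ), k, by
    have hp : (p : ℚ) ^ k ≠ 0 := by simp [(Fact.out : p.Prime).ne_zero]
    rw [← QuotientAddGroup.mk_nsmul, QuotientAddGroup.eq_zero_iff]
    exact ⟨1, by simp [hp]⟩⟩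

variable {p}

theorem exists_root_zpow_eq (x : Prufer p) : ∃ (k : ℕ) (m : ℤ), root p k ^ m = x := by
  obtain ⟨y, k, hk⟩ := (x : AddCommGroup.primaryComponent QmodZ p)
  have hp : (p : ℚ) ^ k ≠ 0 := by simp [(Fact.out : p.Prime).ne_zero]
  induction y using QuotientAddGroup.induction_on with
  | H q =>
    rw [← QuotientAddGroup.mk_nsmul, QuotientAddGroup.eq_zero_iff] at hk
    obtain ⟨m, hm⟩ := hk
    refine ⟨k, m, Subtype.ext ?_⟩
    change m • (((1 : ℚ) / p ^ k : ℚ) : QmodZ) = (q : QmodZ)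
    rw [← QuotientAddGroup.mk_zsmul]
    congr 1
    simp only [zsmul_eq_mul, nsmul_eq_mul, mul_one, Nat.cast_pow] at hm ⊢
    rw [hm]
    field_simp

theorem root_zero : root p 0 = 1 := by
  exact Subtype.ext ((QuotientAddGroup.eq_zero_iff _).2 ⟨1, by simp⟩)

theorem root_succ_pow (k : ℕ) : root p (k + 1) ^ p = root p k := by
  refine Subtype.ext ?_
  change p • (((1 : ℚ) / p ^ (k + 1) : ℚ) : QmodZ) = (((1 : ℚ) / p ^ k : ℚ) : QmodZ)
  have hp : (p : ℚ) ≠ 0 := by simp [(Fact.out : p.Prime).ne_zero]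
  rw [← QuotientAddGroup.mk_nsmul]
  congr 1
  rw [nsmul_eq_mul, pow_succ]
  field_simp

theorem root_one_ne_one : root p 1 ≠ 1 := fun h => by
  obtain ⟨m, hm⟩ := (QuotientAddGroup.eq_zero_iff _).1
    (congrArg (fun x : AddCommGroup.primaryComponent QmodZ p => (x : QmodZ)) h)
  have hp : (p : ℚ) ≠ 0 := by simp [(Fact.out : p.Prime).ne_zero]
  simp only [zsmul_eq_mul, mul_one, pow_one] at hm
  rw [eq_div_iff hp] at hm
  have hm' : m * (p : ℤ) = 1 := by exact_mod_cast hm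
  exact (Nat.prime_iff_prime_int.1 (Fact.out : p.Prime)).not_isUnit
    (.of_mul_eq_one m (by rwa [mul_comm]))

theorem root_pow (k : ℕ) : root p k ^ p ^ k = 1 := by
  induction k with
  | zero => simp [root_zero]
  | succ k ih => rw [pow_succ', pow_mul, root_succ_pow, ih]

theorem isPGroup : IsPGroup p (Prufer p) := fun x => by
  obtain ⟨k, m, rfl⟩ := exists_root_zpow_eq x
  exact ⟨k, by rw [← zpow_natCast, zpow_comm, zpow_natCast, root_pow, one_zpow]⟩

theorem exists_pow_eq (x : Prufer p) : ∃ y : Prufer p, y ^ p = x := by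
  obtain ⟨k, m, rfl⟩ := exists_root_zpow_eq x
  exact ⟨root p (k + 1) ^ m, by rw [← zpow_natCast, zpow_comm, zpow_natCast, root_succ_pow]⟩

theorem zpowers_root_mono : Monotone fun k : ℕ => Subgroup.zpowers (root p k) :=
  monotone_nat_of_le_succ fun k => by
    rw [Subgroup.zpowers_le, ← root_succ_pow k]
    exact Subgroup.npow_mem_zpowers _ _

theorem exists_zpowers_eq (x : Prufer p) :
    ∃ k, Subgroup.zpowers x = Subgroup.zpowers (root p k) := by
  obtain ⟨k, m, rfl⟩ := exists_root_zpow_eq x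
  induction k generalizing m with
  | zero => exact ⟨0, by simp [root_zero]⟩
  | succ k ih =>
    by_cases hm : (p : ℤ) ∣ m
    · obtain ⟨n, rfl⟩ := hm
      rw [zpow_mul, zpow_natCast, root_succ_pow]
      exact ih n
    · refine ⟨k + 1, le_antisymm ?_ ?_⟩
      · rw [Subgroup.zpowers_le]
        exact Subgroup.zpow_mem_zpowers _ _
      · obtain ⟨u, v, huv⟩ : IsCoprime m ((p ^ (k + 1) : ℕ) : ℤ) := by
          push_cast
          exact (((Nat.prime_iff_prime_int.1
            (Fact.out : p.Prime)).irreducible.coprime_iff_not_dvd.2 hm).symm).pow_right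
        rw [Subgroup.zpowers_le]
        refine ⟨u, ?_⟩
        change (root p (k + 1) ^ m) ^ u = root p (k + 1)
        calc (root p (k + 1) ^ m) ^ u
            = root p (k + 1) ^ (u * m + v * ((p ^ (k + 1) : ℕ) : ℤ)) := by
              rw [zpow_add, mul_comm v, zpow_mul _ _ v, zpow_natCast, root_pow, one_zpow, mul_one,
                mul_comm, zpow_mul]
          _ = root p (k + 1) := by rw [huv, zpow_one]

theorem finite_of_ne_top {H : Subgroup (Prufer p)} (hH : H ≠ ⊤) : Finite H := by
  obtain ⟨y, hy⟩ : ∃ y, y ∉ H := by simpa [Subgroup.eq_top_iff'] using hH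
  have hle : H ≤ Subgroup.zpowers y := fun x hx => by
    obtain ⟨k, hk⟩ := exists_zpowers_eq x
    obtain ⟨l, hl⟩ := exists_zpowers_eq y
    rcases le_total k l with h | h
    · rw [← Subgroup.zpowers_le, hk, hl]
      exact zpowers_root_mono h
    · refine absurd ?_ hy
      have hyx : Subgroup.zpowers y ≤ Subgroup.zpowers x := by
        rw [hk, hl]
        exact zpowers_root_mono h
      exact Subgroup.zpowers_le.1 (hyx.trans (Subgroup.zpowers_le.2 hx))
  have : Finite (Subgroup.zpowers y) :=
    finite_zpowers.2 (isPGroup.isOfFinOrder (Fact.out : p.Prime).ne_zero y)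
  exact Finite.of_injective _ (Subgroup.inclusion_injective hle)

theorem wellFoundedLT_subgroup : WellFoundedLT (Subgroup (Prufer p)) :=
  StrictMono.wellFoundedLT (f := fun H : Subgroup (Prufer p) => (H : Set (Prufer p)).encard)
    fun H _ hHK => by
      have : Finite H := finite_of_ne_top hHK.ne_top
      exact Set.Finite.encard_lt_encard (Set.toFinite _) hHK

theorem ker_powMonoidHom :
    (powMonoidHom p : Prufer p →* Prufer p).ker = Subgroup.zpowers (root p 1) := by
  refine le_antisymm (fun x hx => ?_) ?_
  · have hx : x ^ p = 1 := hx
    obtain ⟨k, hk⟩ := exists_zpowers_eq x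
    obtain ⟨m, hm⟩ : root p k ∈ Subgroup.zpowers x := hk ▸ Subgroup.mem_zpowers _
    have hroot : root p k ^ p = 1 := by
      rw [← hm]
      change (x ^ m) ^ p = 1
      rw [← zpow_natCast, zpow_comm, zpow_natCast, hx, one_zpow]
    have hk1 : k ≤ 1 := by
      by_contra! hk1
      obtain ⟨j, rfl⟩ := Nat.exists_eq_add_of_le' hk1
      rw [root_succ_pow] at hroot
      have hle := zpowers_root_mono (p := p) (Nat.le_add_left 1 j)
      simp only [hroot, Subgroup.zpowers_one_eq_bot, le_bot_iff, Subgroup.zpowers_eq_bot] at hle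
      exact root_one_ne_one hle
    exact zpowers_root_mono hk1 (hk.le (Subgroup.mem_zpowers x))
  · rw [Subgroup.zpowers_le, MonoidHom.mem_ker, powMonoidHom_apply, root_succ_pow, root_zero]

theorem natCard_ker_powMonoidHom :
    Nat.card (powMonoidHom p : Prufer p →* Prufer p).ker = p := by
  rw [ker_powMonoidHom, Nat.card_zpowers]
  exact orderOf_eq_prime (by rw [root_succ_pow, root_zero]) root_one_ne_one

theorem natCard_ker_powMonoidHom_pi (r : ℕ) :
    Nat.card (powMonoidHom p : (Fin r → Prufer p) →* (Fin r → Prufer p)).ker = p ^ r := by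
  let K := (powMonoidHom p : Prufer p →* Prufer p).ker
  let e : (powMonoidHom p : (Fin r → Prufer p) →* (Fin r → Prufer p)).ker ≃ (Fin r → K) :=
    { toFun := fun x i => ⟨x.1 i, congrFun x.2 i⟩
      invFun := fun x => ⟨fun i => x i, funext fun i => (x i).2⟩
      left_inv := fun _ => rfl
      right_inv := fun _ => rfl }
  rw [Nat.card_congr e, Nat.card_fun, natCard_ker_powMonoidHom, Nat.card_fin]

theorem isPGroup_pi (r : ℕ) : IsPGroup p (Fin r → Prufer p) := fun x => by
  choose k hk using fun i => isPGroup (x i)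
  refine ⟨∑ i, k i, funext fun i => ?_⟩
  obtain ⟨m, hm⟩ := pow_dvd_pow p (Finset.single_le_sum (f := k) (fun _ _ => Nat.zero_le _)
    (Finset.mem_univ i))
  rw [Pi.pow_apply, hm, pow_mul, hk, one_pow, Pi.one_apply]

end Prufer

section Main

variable {p : ℕ} [Fact p.Prime] {G : Type*} [Group G]

theorem forall_fg_finite_isPGroup_of_isPGroup {A : Type*} [CommGroup A] (hA : IsPGroup p A)
    (H : Subgroup A) (hH : H.FG) : Finite H ∧ IsPGroup p H := by
  have := (Group.fg_iff_subgroup_fg H).2 hH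
  have hHp := hA.to_subgroup H
  exact ⟨CommGroup.finite_of_fg_isMulTorsion H
    (hHp.isOfFinOrder (Fact.out : p.Prime).ne_zero), hHp⟩

/-- The property that all finitely generated subgroups are finite passes to finite extensions. -/
theorem finite_of_fg_of_finiteIndex (N : Subgroup G) [N.FiniteIndex]
    (hN : ∀ K : Subgroup N, K.FG → Finite K) (H : Subgroup G) (hH : H.FG) : Finite H := by
  have := (Group.fg_iff_subgroup_fg H).2 hH
  let f : N.subgroupOf H →* N := (H.subtype.comp (N.subgroupOf H).subtype).codRestrict N
    fun x => x.2
  have hf : Function.Injective f := fun x y hxy =>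
    Subtype.ext (Subtype.ext (congrArg (fun z : N => (z : G)) hxy))
  have : Finite f.range := hN _ <| (Group.fg_iff_subgroup_fg _).1 <|
    Group.fg_of_surjective f.rangeRestrict_surjective
  have hfin : Finite (N.subgroupOf H) :=
    Finite.of_injective f.rangeRestrict (f.rangeRestrict_injective_iff.2 hf)
  exact (finite_iff_subgroup_quotient (N.subgroupOf H)).2 ⟨hfin, inferInstance⟩

theorem IsDiscretePToral.subgroupArtinian (h : IsDiscretePToral p G) : SubgroupArtinian G := by
  obtain ⟨N, hN, ⟨r, ⟨e⟩⟩, hfin, -⟩ := h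
  have := Prufer.wellFoundedLT_subgroup (p := p)
  have := wellFoundedLT_subgroup_pi (G := Prufer p) r
  have : WellFoundedLT (Subgroup (QuotientGroup.mk' N).ker) := by
    rw [QuotientGroup.ker_mk']
    exact wellFoundedLT_subgroup_of_injective e.toMonoidHom e.injective
  exact (subgroupArtinian_iff_wellFoundedLT G).2
    (wellFoundedLT_subgroup_of_ker_range (QuotientGroup.mk' N))

theorem IsDiscretePToral.finite_isPGroup_of_fg (h : IsDiscretePToral p G) (H : Subgroup G)
    (hH : H.FG) : Finite H ∧ IsPGroup p H := by
  obtain ⟨N, hN, ⟨r, ⟨e⟩⟩, hfin, hp⟩ := h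
  have hNp : IsPGroup p N := (Prufer.isPGroup_pi r).of_equiv e.symm
  have : N.FiniteIndex := Subgroup.finiteIndex_of_finite_quotient
  refine ⟨finite_of_fg_of_finiteIndex N (fun K hK => ?_) H hH,
    (isPGroup_of_isPGroup_quotient N hNp hp).to_subgroup H⟩
  exact (forall_fg_finite_isPGroup_of_injective
    (forall_fg_finite_isPGroup_of_isPGroup (Prufer.isPGroup_pi r)) e.toMonoidHom e.injective
    K hK).1

/-- A divisible abelian `p`-group with the minimal condition is a finite power of the Prüfer
group. -/
theorem exists_mulEquiv_pi_prufer {A : Type*} [CommGroup A] [WellFoundedLT (Subgroup A)]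
    (hA : IsPGroup p A) (hdiv : ∀ a : A, ∃ b : A, b ^ p = a) :
    ∃ r : ℕ, Nonempty (A ≃* (Fin r → Prufer p)) := by
  let K := (powMonoidHom p : A →* A).ker
  have hK : ∀ x : K, x ^ p = 1 := fun x => Subtype.ext x.2
  have : WellFoundedLT (Subgroup K) :=
    wellFoundedLT_subgroup_of_injective K.subtype K.subtype_injective
  have : Finite K := finite_of_wellFoundedLT_of_pow_eq_one hK
  obtain ⟨r, hr⟩ := IsPGroup.iff_card.1 (hA.to_subgroup K)
  have hcard := Prufer.natCard_ker_powMonoidHom_pi (p := p) r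
  have : Finite (powMonoidHom p : (Fin r → Prufer p) →* (Fin r → Prufer p)).ker :=
    Nat.finite_of_card_ne_zero (hcard ▸ pow_ne_zero r (Fact.out : p.Prime).ne_zero)
  obtain ⟨e⟩ := nonempty_mulEquiv_of_pow_eq_one hK (fun x => Subtype.ext x.2)
    (hr.trans hcard.symm)
  refine ⟨r, nonempty_mulEquiv_of_ker_powMonoidHom hA (Prufer.isPGroup_pi r) hdiv (fun x => ?_) e⟩
  choose y hy using fun i => Prufer.exists_pow_eq (x i)
  exact ⟨y, funext hy⟩

theorem isDiscretePToral_of_wellFoundedLT [WellFoundedLT (Subgroup G)]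
    (hG : ∀ H : Subgroup G, H.FG → Finite H ∧ IsPGroup p H) : IsDiscretePToral p G := by
  obtain ⟨N, hN, hNindex, hle⟩ := exists_normal_finiteIndex_le (G := G)
  have hGp := isPGroup_of_forall_fg hG
  have : WellFoundedLT (Subgroup N) :=
    wellFoundedLT_subgroup_of_injective N.subtype N.subtype_injective
  have hindex : ∀ H : Subgroup N, H.FiniteIndex → H = ⊤ := fun H hH => by
    have hmap : N ≤ H.map N.subtype := hle _
      ⟨by rw [Subgroup.index_map_subtype]; exact mul_ne_zero hH.1 hNindex.1⟩
    refine (Subgroup.eq_top_iff' H).2 fun x => ?_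
    obtain ⟨y, hy, hyx⟩ := hmap x.2
    exact Subtype.ext hyx ▸ hy
  let : CommGroup N := Group.commGroupOfCenterEqTop <| center_eq_top_of_finiteIndex_eq_top
    (forall_fg_finite_isPGroup_of_injective hG N.subtype N.subtype_injective) hindex
  exact ⟨N, hN, exists_mulEquiv_pi_prufer (hGp.to_subgroup N)
    (exists_pow_eq_of_finiteIndex_eq_top hindex), inferInstance, hGp.to_quotient N⟩

end Main

/-- A group is discrete `p`-toral if and only if it is artinian and every finitely
generated subgroup is a finite `p`-group. -/
theorem isDiscretePToral_iff_artinian_and_fg_finite_pGroup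
    (p : ℕ) [Fact p.Prime] (S : Type*) [Group S] :
    IsDiscretePToral p S ↔
      (SubgroupArtinian S ∧ ∀ H : Subgroup S, H.FG → Finite H ∧ IsPGroup p H) := by
  rw [subgroupArtinian_iff_wellFoundedLT]
  exact ⟨fun h => ⟨(subgroupArtinian_iff_wellFoundedLT S).1 h.subgroupArtinian,
    h.finite_isPGroup_of_fg⟩, fun ⟨hS, hfg⟩ => isDiscretePToral_of_wellFoundedLT hfg⟩
end

section
/- An extension of a discrete p-toral group by a discrete p-toral group is discrete p-toral: if N ⊴ G with N and G/N both discrete p-toral, then G is discrete p-toral. -/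
section PruferAdditive

variable {p : ℕ}

theorem exists_nsmul_eq_primaryComponent [Fact p.Prime] {n : ℕ} (hn : n ≠ 0)
    (x : AddCommGroup.primaryComponent QmodZ p) : ∃ y, n • y = x := by
  obtain ⟨m, hm⟩ := x.2
  obtain ⟨k, t, ht, rfl⟩ := Nat.exists_eq_pow_mul_and_not_dvd hn p (Fact.out : p.Prime).ne_one
  obtain ⟨y, hy⟩ : ∃ y : QmodZ, ((p ^ k : ℕ) : ℤ) • y = x.1 :=
    ⟨DivisibleBy.div (α := ℤ) (A := AddCircle (1 : ℚ)) x.1 ((p ^ k : ℕ) : ℤ),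
      DivisibleBy.div_cancel _ (by exact_mod_cast pow_ne_zero k (Fact.out : p.Prime).ne_zero)⟩
  rw [natCast_zsmul] at hy
  have hy' : p ^ (k + m) • y = 0 := by
    rw [pow_add, mul_comm, mul_smul, hy, hm]
  have hcop : IsCoprime (t : ℤ) ((p ^ (k + m) : ℕ) : ℤ) := by
    rw [Nat.isCoprime_iff_coprime]
    exact (((Fact.out : p.Prime).coprime_iff_not_dvd.2 ht).pow_left _).symm
  obtain ⟨a, b, hab⟩ := hcop
  have hty : t • (a • y) = y := by
    have := congrArg (· • y) hab
    simp only [add_smul, mul_smul, natCast_zsmul, hy', smul_zero, add_zero, one_smul] at this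
    rw [smul_comm, this]
  refine ⟨⟨a • y, k + m, ?_⟩, Subtype.ext ?_⟩
  · rw [smul_comm, hy', smul_zero]
  · change (p ^ k * t) • (a • y) = x.1
    rw [mul_smul, hty, hy]

theorem finite_nsmul_eq_zero_primaryComponent {n : ℕ} (hn : n ≠ 0) :
    {x : AddCommGroup.primaryComponent QmodZ p | n • x = 0}.Finite := by
  refine Set.Finite.of_finite_image (f := Subtype.val) ?_ Subtype.val_injective.injOn
  refine (AddCircle.finite_torsion (1 : ℚ) (Nat.pos_of_ne_zero hn)).subset ?_
  rintro _ ⟨x, hx, rfl⟩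
  exact congrArg Subtype.val hx

theorem card_nsmul_eq_zero_primaryComponent [Fact p.Prime] :
    Nat.card (nsmulAddMonoidHom p : AddCommGroup.primaryComponent QmodZ p →+ _).ker = p := by
  have hp : p.Prime := Fact.out
  let u : AddCircle (1 : ℚ) := ((1 / p : ℚ) : AddCircle (1 : ℚ))
  have hu : addOrderOf u = p := AddCircle.addOrderOf_period_div hp.pos
  have hpu : p • u = 0 := by
    simpa [hu] using addOrderOf_nsmul_eq_zero u
  refine Eq.trans (Nat.card_congr ?_) ((Nat.card_zmultiples u).trans hu)
  refine
    ⟨fun x => ⟨x.1.1, ?_⟩, fun y => ⟨⟨y.1, 1, ?_⟩, ?_⟩, fun _ => rfl, fun _ => rfl⟩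
  · have hx : p • (x.1.1 : AddCircle (1 : ℚ)) = 0 := congrArg Subtype.val x.2
    obtain ⟨q, hq⟩ := QuotientAddGroup.mk_surjective (x.1.1 : QmodZ)
    rw [← hq] at hx ⊢
    obtain ⟨m, hm⟩ := (AddCircle.coe_eq_zero_iff (1 : ℚ) (x := p • q)).1 hx
    refine AddSubgroup.mem_zmultiples_iff.2 ⟨m, ?_⟩
    change ((m • (1 / p : ℚ) : ℚ) : AddCircle (1 : ℚ)) = (q : AddCircle (1 : ℚ))
    congr 1
    have : (p : ℚ) ≠ 0 := by exact_mod_cast hp.ne_zero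
    simp only [zsmul_eq_mul, nsmul_eq_mul] at hm ⊢
    field_simp
    linarith
  · obtain ⟨m, hm⟩ := AddSubgroup.mem_zmultiples_iff.1 y.2
    rw [pow_one, ← hm]
    exact (smul_comm _ _ _).trans (by rw [hpu, smul_zero])
  · obtain ⟨m, hm⟩ := AddSubgroup.mem_zmultiples_iff.1 y.2
    refine Subtype.ext ?_
    change p • y.1 = 0
    rw [← hm, smul_comm, hpu, smul_zero]

/-- A divisible abelian `p`-group with finite `p`-torsion is a finite power of the
Prüfer group. -/
theorem exists_addEquiv_pi_primaryComponent [Fact p.Prime] {A : Type*} [AddCommGroup A]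
    (htors : ∀ a : A, ∃ k : ℕ, p ^ k • a = 0) (hfin : {a : A | p • a = 0}.Finite)
    (hdiv : ∀ a : A, ∃ b, p • b = a) :
    ∃ r : ℕ, Nonempty (A ≃+ (Fin r → AddCommGroup.primaryComponent QmodZ p)) := by
  have hp : p.Prime := Fact.out
  let KA := (nsmulAddMonoidHom p : A →+ A).ker
  have : Finite KA := hfin
  let _ : Module (ZMod p) KA := AddCommGroup.zmodModule (n := p) fun x => Subtype.ext x.2
  let r := Module.finrank (ZMod p) KA
  have hKA : Nat.card KA = p ^ r := by
    rw [Module.natCard_eq_pow_finrank (K := ZMod p), Nat.card_zmod]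
  let B := Fin r → AddCommGroup.primaryComponent QmodZ p
  let KB := (nsmulAddMonoidHom p : B →+ B).ker
  let _ : Module (ZMod p) KB := AddCommGroup.zmodModule (n := p) fun x => Subtype.ext x.2
  have hKB : Nat.card KB = p ^ r := by
    have e : KB ≃
        (Fin r → (nsmulAddMonoidHom p : AddCommGroup.primaryComponent QmodZ p →+ _).ker) :=
      ⟨fun x i => ⟨x.1 i, congrFun x.2 i⟩, fun y => ⟨fun i => (y i).1, funext fun i => (y i).2⟩,
        fun _ => rfl, fun _ => rfl⟩
    rw [Nat.card_congr e, Nat.card_fun, card_nsmul_eq_zero_primaryComponent, Nat.card_fin]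
  have : Finite KB := Nat.finite_of_card_ne_zero (by rw [hKB]; exact pow_ne_zero _ hp.ne_zero)
  have hrank : Module.finrank (ZMod p) KB = r := by
    have := Module.natCard_eq_pow_finrank (K := ZMod p) (V := KB)
    rw [hKB, Nat.card_zmod] at this
    exact (Nat.pow_right_injective hp.two_le this).symm
  obtain ⟨e⟩ : Nonempty (KA ≃ₗ[ZMod p] KB) :=
    FiniteDimensional.nonempty_linearEquiv_of_finrank_eq hrank.symm
  let _ : DivisibleBy B ℤ := AddCommGroup.divisibleByIntOfSMulTopEqTop B fun {n} hn => by
    refine top_unique fun x _ => ?_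
    choose y hy using fun i =>
      exists_nsmul_eq_primaryComponent (p := p) (Int.natAbs_ne_zero.2 hn) (x i)
    have hy' : n.natAbs • (y : B) = x := funext hy
    rcases Int.natAbs_eq n with h | h
    · exact ⟨y, trivial, by change n • y = x; rw [h, natCast_zsmul, hy']⟩
    · exact ⟨-y, trivial, by
        change n • (-y) = x; rw [h, neg_smul_neg, natCast_zsmul, hy']⟩
  obtain ⟨f, hf⟩ := (Module.Baer.of_divisible B).extension_property_addMonoidHom
    KA.subtype KA.subtype_injective (KB.subtype.comp e.toAddEquiv.toAddMonoidHom)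
  have hfe : ∀ a : KA, f a = (e a : B) := fun a => DFunLike.congr_fun hf a
  refine ⟨r, ⟨AddEquiv.ofBijective f ⟨(injective_iff_map_eq_zero f).2 ?_, ?_⟩⟩⟩
  · have key : ∀ (k : ℕ) (a : A), p ^ k • a = 0 → f a = 0 → a = 0 := by
      intro k
      induction k with
      | zero => intro a ha _; simpa using ha
      | succ k ih =>
        intro a ha hfa
        have hpa : p • a = 0 := ih (p • a) (by rw [smul_smul, ← pow_succ, ha])
          (by rw [map_nsmul, hfa, smul_zero])
        have h0 : e ⟨a, hpa⟩ = 0 := Subtype.ext ((hfe ⟨a, hpa⟩).symm.trans hfa)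
        exact congrArg Subtype.val ((map_eq_zero_iff e e.injective).1 h0)
    intro a ha
    obtain ⟨k, hk⟩ := htors a
    exact key k a hk ha
  · have key : ∀ (k : ℕ) (b : B), p ^ k • b = 0 → ∃ a, f a = b := by
      intro k
      induction k with
      | zero => intro b hb; exact ⟨0, by rw [map_zero]; simpa using hb.symm⟩
      | succ k ih =>
        intro b hb
        obtain ⟨a, ha⟩ := ih (p • b) (by rw [smul_smul, ← pow_succ, hb])
        obtain ⟨c, rfl⟩ := hdiv a
        have hmem : p • (b - f c) = 0 := by rw [smul_sub, ← ha, map_nsmul, sub_self]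
        refine ⟨c + (e.symm ⟨b - f c, hmem⟩ : KA), ?_⟩
        rw [map_add, hfe, LinearEquiv.apply_symm_apply, add_sub_cancel]
    intro b
    choose k hk using fun i => (b i).2
    refine key (∑ i, k i) b (funext fun i => Subtype.ext ?_)
    obtain ⟨m, hm⟩ := pow_dvd_pow p (Finset.single_le_sum (fun _ _ => Nat.zero_le _)
      (Finset.mem_univ i) : k i ≤ ∑ i, k i)
    change p ^ (∑ i, k i) • (b i).1 = 0
    rw [hm, mul_comm, mul_smul, hk i, smul_zero]

end PruferAdditive

theorem exists_addMonoidHom_zmod_ne_zero {V : Type*} [AddCommGroup V] (p : ℕ)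
    [Fact p.Prime] [Module (ZMod p) V] {v : V} (hv : v ≠ 0) :
    ∃ φ : V →+ ZMod p, φ v ≠ 0 := by
  obtain ⟨φ, hφ⟩ : ∃ φ : Module.Dual (ZMod p) V, φ v ≠ 0 :=
    Module.Projective.exists_dual_ne_zero _ hv
  exact ⟨φ.toAddMonoidHom, hφ⟩

section NoProperFiniteIndex

/-- A group has no proper subgroups of finite index. -/
def NoProperFiniteIndex (P : Type*) [Group P] : Prop :=
  ∀ L : Subgroup P, L.FiniteIndex → L = ⊤

namespace NoProperFiniteIndex

theorem of_surjective {P R : Type*} [Group P] [Group R] (hP : NoProperFiniteIndex P)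
    (f : P →* R) (hf : Function.Surjective f) : NoProperFiniteIndex R := by
  intro L hL
  have h : L.comap f = ⊤ := hP _ ⟨by rw [Subgroup.index_comap_of_surjective _ hf]; exact hL.1⟩
  rw [← Subgroup.map_comap_eq_self_of_surjective hf L, h, Subgroup.map_top_of_surjective f hf]

theorem of_divisible {P : Type*} [CommGroup P] (h : ∀ n : ℕ, n ≠ 0 → ∀ x : P, ∃ y, y ^ n = x) :
    NoProperFiniteIndex P := by
  intro L hL
  refine top_unique fun x _ => ?_
  obtain ⟨y, rfl⟩ := h L.index hL.1 x
  exact L.pow_index_mem y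

theorem range_le {P G : Type*} [Group P] [Group G] (hP : NoProperFiniteIndex P) (f : P →* G)
    (L : Subgroup G) [L.FiniteIndex] : f.range ≤ L := by
  rw [MonoidHom.range_eq_map, Subgroup.map_le_iff_le_comap]
  refine (hP (L.comap f) ⟨?_⟩).ge
  rw [Subgroup.index_comap]
  exact (inferInstance : (L.subgroupOf f.range).FiniteIndex).1

theorem le_of_finiteIndex {G : Type*} [Group G] {T : Subgroup G} (hT : NoProperFiniteIndex T)
    (L : Subgroup G) [L.FiniteIndex] : T ≤ L := by
  simpa using hT.range_le T.subtype L

theorem mem_center_of_finite_conj {P : Type*} [Group P] (hP : NoProperFiniteIndex P) {x : P}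
    (hx : (Set.range fun g : P => g * x * g⁻¹).Finite) : x ∈ Subgroup.center P := by
  have h : (MulAction.stabilizer (ConjAct P) x).FiniteIndex := by
    refine ⟨?_⟩
    rw [MulAction.index_stabilizer]
    exact ((Set.ncard_pos hx).2 (Set.range_nonempty _)).ne'
  have htop := hP (MulAction.stabilizer (ConjAct P) x) h
  rw [Subgroup.mem_center_iff]
  intro g
  have hg : g ∈ (MulAction.stabilizer (ConjAct P) x : Subgroup P) := htop ▸ Subgroup.mem_top g
  exact mul_inv_eq_iff_eq_mul.1 hg

/-- A torsion group `P` without proper finite-index subgroups is abelian as soon as it has normal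
subgroups `T ≤ M` with `P / M` abelian, `M / T` finite and `T` having only finitely many elements
of each exponent. -/
theorem mul_comm_of_torsion {P : Type*} [Group P] (hP : NoProperFiniteIndex P)
    (htors : ∀ x : P, ∃ n : ℕ, n ≠ 0 ∧ x ^ n = 1) (T M : Subgroup P) [T.Normal]
    (hTfin : ∀ n : ℕ, n ≠ 0 → {x | x ∈ T ∧ x ^ n = 1}.Finite)
    (hMfin : (M.map (QuotientGroup.mk' T) : Set (P ⧸ T)).Finite)
    (hcomm : ∀ x y : P, y * x * y⁻¹ * x⁻¹ ∈ M) (x y : P) : x * y = y * x := by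
  have hTcenter : T ≤ Subgroup.center P := by
    intro x hx
    obtain ⟨n, hn, hxn⟩ := htors x
    refine hP.mem_center_of_finite_conj ((hTfin n hn).subset ?_)
    rintro _ ⟨g, rfl⟩
    exact ⟨Subgroup.Normal.conj_mem inferInstance x hx g, by rw [conj_pow, hxn]; simp⟩
  have hquot : ∀ x y : P, y * x * y⁻¹ * x⁻¹ ∈ T := by
    have hPT := hP.of_surjective (QuotientGroup.mk' T) (QuotientGroup.mk'_surjective T)
    intro x y
    have hx : (QuotientGroup.mk' T x) ∈ Subgroup.center (P ⧸ T) := by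
      refine hPT.mem_center_of_finite_conj
        ((hMfin.image (· * QuotientGroup.mk' T x)).subset ?_)
      rintro _ ⟨g, rfl⟩
      obtain ⟨g, rfl⟩ := QuotientGroup.mk'_surjective T g
      exact ⟨_, ⟨_, hcomm x g, rfl⟩, by simp⟩
    rw [← QuotientGroup.eq_one_iff]
    have := Subgroup.mem_center_iff.1 hx (QuotientGroup.mk' T y)
    change QuotientGroup.mk' T _ = 1
    rw [map_mul, map_mul, map_mul, this]
    simp
  have hx : x ∈ Subgroup.center P := by
    obtain ⟨n, hn, hxn⟩ := htors x
    refine hP.mem_center_of_finite_conj (((hTfin n hn).image (· * x)).subset ?_)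
    rintro _ ⟨g, rfl⟩
    refine ⟨g * x * g⁻¹ * x⁻¹, ⟨hquot x g, ?_⟩, by simp⟩
    have hc : Commute (g * x * g⁻¹ * x⁻¹) x :=
      (Subgroup.mem_center_iff.1 (hTcenter (hquot x g)) x).symm
    have h := hc.mul_pow n
    rw [inv_mul_cancel_right, conj_pow, hxn] at h
    simpa using h.symm
  exact (Subgroup.mem_center_iff.1 hx y).symm

theorem exists_pow_prime_eq {P : Type*} [CommGroup P] (hP : NoProperFiniteIndex P)
    (p : ℕ) [Fact p.Prime] (x : P) : ∃ y, y ^ p = x := by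
  let R : AddSubgroup (Additive P) := (nsmulAddMonoidHom p : Additive P →+ Additive P).range
  have hR : ∀ v : Additive P ⧸ R, p • v = 0 := by
    rintro ⟨a⟩
    exact (QuotientAddGroup.eq_zero_iff (p • a)).2 ⟨a, rfl⟩
  have h0 : (QuotientAddGroup.mk' R (Additive.ofMul x)) = 0 := by
    by_contra hne
    let _ : Module (ZMod p) (Additive P ⧸ R) := AddCommGroup.zmodModule hR
    obtain ⟨φ, hφ⟩ := exists_addMonoidHom_zmod_ne_zero p hne
    let ψ : P →* Multiplicative (ZMod p) :=
      AddMonoidHom.toMultiplicativeRight (φ.comp (QuotientAddGroup.mk' R))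
    have hψ : x ∈ ψ.ker := by
      rw [hP ψ.ker inferInstance]
      trivial
    exact hφ hψ
  obtain ⟨y, hy⟩ := (QuotientAddGroup.eq_zero_iff _).1 h0
  exact ⟨y.toMul, hy⟩

end NoProperFiniteIndex

theorem Subgroup.index_le_of_noProperFiniteIndex {G : Type*} [Group G] {N : Subgroup G} [N.Normal]
    {T : Subgroup N} {U : Subgroup (G ⧸ N)} (hT : NoProperFiniteIndex T)
    (hU : NoProperFiniteIndex U) [T.FiniteIndex] [U.FiniteIndex] (L : Subgroup G)
    [L.Normal] [L.FiniteIndex] : L.index ≤ T.index * U.index := by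
  rw [← Subgroup.relIndex_mul_index (le_sup_left : L ≤ L ⊔ N)]
  refine Nat.mul_le_mul ?_ ?_
  · rw [Subgroup.relIndex_sup_left]
    exact Subgroup.index_antitone (hT.le_of_finiteIndex (L.subgroupOf N))
  · have h : (L.map (QuotientGroup.mk' N)).index = (L ⊔ N).index := by
      rw [Subgroup.index_map, QuotientGroup.ker_mk', QuotientGroup.range_mk', Subgroup.index_top,
        mul_one]
    have : (L.map (QuotientGroup.mk' N)).FiniteIndex :=
      ⟨by rw [h]; exact (Subgroup.finiteIndex_of_le (le_sup_left : L ≤ L ⊔ N)).1⟩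
    rw [← h]
    exact Subgroup.index_antitone (hU.le_of_finiteIndex _)

/-- If the indices of the normal finite-index subgroups are bounded, there is a least such subgroup;
it has no proper finite-index subgroups. -/
theorem Subgroup.exists_least_finiteIndex {G : Type*} [Group G] {b : ℕ}
    (hb : ∀ L : Subgroup G, L.Normal → L.FiniteIndex → L.index ≤ b) :
    ∃ P : Subgroup G, P.Normal ∧ P.FiniteIndex ∧ NoProperFiniteIndex P := by
  let S : Set ℕ := {n | ∃ L : Subgroup G, L.Normal ∧ L.FiniteIndex ∧ L.index = n}
  have hSne : S.Nonempty := ⟨_, ⊤, inferInstance, inferInstance, rfl⟩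
  have hSb : BddAbove S := ⟨b, by rintro _ ⟨L, hLn, hL, rfl⟩; exact hb L hLn hL⟩
  obtain ⟨P, hPn, hPfin, hPmax⟩ := Nat.sSup_mem hSne hSb
  have hle : ∀ L : Subgroup G, L.FiniteIndex → P ≤ L := by
    intro L hL
    refine le_trans ?_ L.normalCore_le
    by_contra hPL
    have hlt : P ⊓ L.normalCore < P := lt_of_le_of_ne inf_le_left fun h => hPL (inf_eq_left.1 h)
    have h1 := Subgroup.index_strictAnti hlt
    have h2 : (P ⊓ L.normalCore).index ≤ sSup S :=
      le_csSup hSb ⟨_, inferInstance, inferInstance, rfl⟩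
    omega
  refine ⟨P, hPn, hPfin, fun L hL => ?_⟩
  have h : (L.map P.subtype).FiniteIndex :=
    ⟨by rw [Subgroup.index_map_subtype]; exact mul_ne_zero hL.1 hPfin.1⟩
  refine top_unique fun x _ => ?_
  obtain ⟨y, hy, hyx⟩ := hle _ h x.2
  rwa [← Subtype.ext hyx]

theorem Subgroup.finite_of_finite_map_of_finite_inf_ker {A B : Type*} [Group A] [Group B]
    (f : A →* B) (K : Subgroup A) (himage : (f '' K).Finite)
    (hker : {a | a ∈ K ∧ f a = 1}.Finite) : (K : Set A).Finite := by
  refine Set.Finite.of_finite_fibers f himage ?_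
  rintro _ ⟨a, ha, rfl⟩
  refine (hker.image (a * ·)).subset ?_
  rintro c ⟨hc, hca⟩
  refine ⟨a⁻¹ * c, ⟨K.mul_mem (K.inv_mem ha) hc, ?_⟩, by simp⟩
  have : f c = f a := hca
  simp [this]

end NoProperFiniteIndex

section Prufer

variable {p : ℕ} [Fact p.Prime] {r : ℕ} {T : Type*} [Group T]

theorem NoProperFiniteIndex.of_mulEquiv_prufer (e : T ≃* (Fin r → Prufer p)) :
    NoProperFiniteIndex T := by
  have h : NoProperFiniteIndex (Fin r → Prufer p) := .of_divisible fun n hn x => by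
    choose y hy using fun i =>
      exists_nsmul_eq_primaryComponent (p := p) hn (Multiplicative.toAdd (x i))
    exact ⟨fun i => Multiplicative.ofAdd (y i), funext hy⟩
  exact h.of_surjective e.symm.toMonoidHom e.symm.surjective

theorem finite_pow_eq_one_of_mulEquiv_prufer (e : T ≃* (Fin r → Prufer p)) {n : ℕ} (hn : n ≠ 0) :
    {x : T | x ^ n = 1}.Finite := by
  refine Set.Finite.of_finite_image (f := e) ?_ e.injective.injOn
  refine (Set.Finite.pi' fun _ : Fin r =>
    finite_nsmul_eq_zero_primaryComponent (p := p) hn).subset ?_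
  rintro _ ⟨x, hx, rfl⟩ i
  have h : e x ^ n = 1 := by rw [← map_pow, show x ^ n = 1 from hx, map_one]
  exact congrFun h i

theorem isPGroup_of_mulEquiv_prufer (e : T ≃* (Fin r → Prufer p)) : IsPGroup p T := by
  intro x
  choose k hk using fun i => (Multiplicative.toAdd (e x i)).2
  refine ⟨∑ i, k i, e.injective ?_⟩
  rw [map_pow, map_one]
  refine funext fun i => Subtype.ext ?_
  obtain ⟨m, hm⟩ := pow_dvd_pow p (Finset.single_le_sum (fun _ _ => Nat.zero_le _)
    (Finset.mem_univ i) : k i ≤ ∑ i, k i)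
  change p ^ (∑ i, k i) • (Multiplicative.toAdd (e x i)).1 = 0
  rw [hm, mul_comm, mul_smul, hk i, smul_zero]

theorem exists_mulEquiv_prufer {A : Type*} [CommGroup A] (hA : IsPGroup p A)
    (hfin : {a : A | a ^ p = 1}.Finite) (hdiv : ∀ a : A, ∃ b, b ^ p = a) :
    ∃ r : ℕ, Nonempty (A ≃* (Fin r → Prufer p)) := by
  obtain ⟨r, ⟨e⟩⟩ := exists_addEquiv_pi_primaryComponent (p := p) (A := Additive A) hA hfin hdiv
  exact ⟨r, ⟨{ toFun := fun a i => Multiplicative.ofAdd (e (Additive.ofMul a) i)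
               invFun := fun b => (e.symm fun i => Multiplicative.toAdd (b i)).toMul
               left_inv := e.left_inv
               right_inv := e.right_inv
               map_mul' := e.map_add' }⟩⟩

end Prufer

theorem IsPGroup.of_normal_of_quotient {p : ℕ} {G : Type*} [Group G] {N : Subgroup G} [N.Normal]
    (hN : IsPGroup p N) (hQ : IsPGroup p (G ⧸ N)) : IsPGroup p G := by
  intro x
  obtain ⟨k, hk⟩ := hQ (x : G ⧸ N)
  obtain ⟨m, hm⟩ := hN ⟨x ^ p ^ k, (QuotientGroup.eq_one_iff _).1 hk⟩
  exact ⟨k + m, by rw [pow_add, pow_mul]; exact congrArg Subtype.val hm⟩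

theorem NoProperFiniteIndex.normal_map_subtype {G : Type*} [Group G] {N : Subgroup G} [N.Normal]
    {T : Subgroup N} (hT : NoProperFiniteIndex T) [hfin : T.FiniteIndex] :
    (T.map N.subtype).Normal := by
  refine ⟨?_⟩
  rintro _ ⟨x, hx, rfl⟩ g
  let φ : N ≃* N := MulAut.conjNormal g
  have h : (T.comap φ.toMonoidHom).FiniteIndex :=
    ⟨by rw [Subgroup.index_comap_of_surjective T (f := φ.toMonoidHom) φ.surjective]; exact hfin.1⟩
  exact ⟨φ x, hT.le_of_finiteIndex (T.comap φ.toMonoidHom) hx, MulAut.conjNormal_apply g x⟩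

/-- An extension of a discrete `p`-toral group by a discrete `p`-toral group is
discrete `p`-toral. -/
theorem isDiscretePToral_of_extension (p : ℕ) [Fact p.Prime] (G : Type*) [Group G]
    (N : Subgroup G) [N.Normal]
    (hN : IsDiscretePToral p N) (hQ : IsDiscretePToral p (G ⧸ N)) :
    IsDiscretePToral p G := by
  have hp : p.Prime := Fact.out
  obtain ⟨N₀, _, ⟨r, ⟨e⟩⟩, _, hpN⟩ := hN
  obtain ⟨Q₀, _, ⟨s, ⟨e'⟩⟩, _, hpQ⟩ := hQ
  have : N₀.FiniteIndex := Subgroup.finiteIndex_of_finite_quotient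
  have : Q₀.FiniteIndex := Subgroup.finiteIndex_of_finite_quotient
  have hN₀ := NoProperFiniteIndex.of_mulEquiv_prufer e
  have hQ₀ := NoProperFiniteIndex.of_mulEquiv_prufer e'
  have hG : IsPGroup p G := .of_normal_of_quotient
    (.of_normal_of_quotient (isPGroup_of_mulEquiv_prufer e) hpN)
    (.of_normal_of_quotient (isPGroup_of_mulEquiv_prufer e') hpQ)
  obtain ⟨P, hPn, hPfin, hP⟩ := Subgroup.exists_least_finiteIndex fun L _ _ =>
    Subgroup.index_le_of_noProperFiniteIndex hN₀ hQ₀ L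
  have : (N₀.map N.subtype).Normal := hN₀.normal_map_subtype
  let T : Subgroup P := (N₀.map N.subtype).subgroupOf P
  let M : Subgroup P := N.subgroupOf P
  let f : P →* G ⧸ N := (QuotientGroup.mk' N).comp P.subtype
  have hfM : ∀ x, f x = 1 ↔ x ∈ M := fun x => QuotientGroup.eq_one_iff _
  have hfQ₀ : ∀ x, f x ∈ Q₀ := fun x => hP.range_le f Q₀ ⟨x, rfl⟩
  have hTfin : ∀ n : ℕ, n ≠ 0 → {x | x ∈ T ∧ x ^ n = 1}.Finite := by
    intro n hn
    refine Set.Finite.of_finite_image (f := P.subtype) ?_ P.subtype_injective.injOn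
    refine ((finite_pow_eq_one_of_mulEquiv_prufer e hn).image fun x : N₀ => (x : G)).subset ?_
    rintro _ ⟨x, ⟨⟨y, hy, hyx⟩, hx⟩, rfl⟩
    refine ⟨⟨y, hy⟩, Subtype.ext (Subtype.ext ?_), hyx⟩
    change (N.subtype y) ^ n = 1
    rw [hyx]
    exact congrArg Subtype.val hx
  have hMfin : (M.map (QuotientGroup.mk' T) : Set (P ⧸ T)).Finite := by
    let j : M →* N := (P.subtype.comp M.subtype).codRestrict N fun m => m.2
    let q : M →* P ⧸ T := (QuotientGroup.mk' T).comp M.subtype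
    have hle : N₀.comap j ≤ q.ker := fun m hm => (QuotientGroup.eq_one_iff _).2 ⟨j m, hm, rfl⟩
    have : (N₀.comap j).FiniteIndex :=
      ⟨by rw [Subgroup.index_comap]
          exact (inferInstance : (N₀.subgroupOf j.range).FiniteIndex).1⟩
    have : q.ker.FiniteIndex := Subgroup.finiteIndex_of_le hle
    have : Finite q.range := .of_equiv _ (QuotientGroup.quotientKerEquivRange q).toEquiv
    refine (Set.toFinite (q.range : Set (P ⧸ T))).subset ?_
    rintro _ ⟨m, hm, rfl⟩
    exact ⟨⟨m, hm⟩, rfl⟩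
  have hcomm : ∀ x y : P, x * y = y * x := by
    refine hP.mul_comm_of_torsion (fun x => ?_) T M hTfin hMfin fun x y => ?_
    · obtain ⟨k, hk⟩ := hG.to_subgroup P x
      exact ⟨p ^ k, pow_ne_zero k hp.ne_zero, hk⟩
    · have h : f y * f x = f x * f y := by
        have := e'.injective (a₁ := ⟨f y, hfQ₀ y⟩ * ⟨f x, hfQ₀ x⟩)
          (a₂ := ⟨f x, hfQ₀ x⟩ * ⟨f y, hfQ₀ y⟩) (by rw [map_mul, map_mul, mul_comm])
        exact congrArg Subtype.val this
      rw [← hfM, map_mul, map_mul, map_mul, h]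
      simp
  let _ : CommGroup P := { (inferInstance : Group P) with mul_comm := hcomm }
  refine ⟨P, hPn, exists_mulEquiv_prufer (hG.to_subgroup P) ?_ (hP.exists_pow_prime_eq p),
    inferInstance, hG.to_quotient P⟩
  let K : Subgroup P := (powMonoidHom p : P →* P).ker
  have hKM : ((K ⊓ M : Subgroup P) : Set P).Finite := by
    refine Subgroup.finite_of_finite_map_of_finite_inf_ker (QuotientGroup.mk' T) _
      (hMfin.subset ?_) ((hTfin p hp.ne_zero).subset ?_)
    · exact Set.image_mono inf_le_right
    · rintro x ⟨hx, hxT⟩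
      exact ⟨(QuotientGroup.eq_one_iff _).1 hxT, hx.1⟩
  refine Subgroup.finite_of_finite_map_of_finite_inf_ker f K ?_ (hKM.subset ?_)
  · refine ((finite_pow_eq_one_of_mulEquiv_prufer e' hp.ne_zero).image Subtype.val).subset ?_
    rintro _ ⟨x, hx, rfl⟩
    refine ⟨⟨f x, hfQ₀ x⟩, Subtype.ext ?_, rfl⟩
    change f x ^ p = 1
    rw [← map_pow, show x ^ p = 1 from hx, map_one]
  · rintro x ⟨hx, hxM⟩
    exact ⟨hx, (hfM x).1 hxM⟩
end

section
/- Let S be an abelian discrete p-toral group and let f : S → S be a surjective group endomorphism. Then there exist unique subgroups T, U ≤ S such that S = T × U (internal direct product), f restricts to an automorphism of T, U is connected (i.e., U ≅ (ℤ/p^∞)^r for some r ≥ 0), and f restricts to a locally nilpotent endomorphism of U. -/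
/-- A `p`-primary abelian group in which multiplication by `p` is surjective is injective as a
`ℤ`-module. -/
theorem baer_of_primary_of_divisible {p : ℕ} (hp : p.Prime) {A : Type*} [AddCommGroup A]
    (tors : ∀ x : A, ∃ k : ℕ, p ^ k • x = 0) (hdiv : ∀ x : A, ∃ y, p • y = x) :
    Module.Baer ℤ A := by
  have hdiv_pow (a : ℕ) : ∀ x : A, ∃ y, p ^ a • y = x := by
    induction a with
    | zero => exact fun x ↦ ⟨x, by simp⟩
    | succ a ih =>
      intro x
      obtain ⟨y, rfl⟩ := hdiv x
      obtain ⟨z, rfl⟩ := ih y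
      exact ⟨z, by rw [pow_succ', mul_smul]⟩
  have hdiv_nat (n : ℕ) (hn : n ≠ 0) (x : A) : ∃ y, n • y = x := by
    obtain ⟨a, m, hm, rfl⟩ := Nat.exists_eq_pow_mul_and_not_dvd hn p hp.ne_one
    obtain ⟨k, hk⟩ := tors x
    have hco : IsCoprime (m : ℤ) ((p ^ k : ℕ) : ℤ) :=
      Nat.isCoprime_iff_coprime.mpr (((Nat.Prime.coprime_iff_not_dvd hp).mpr hm).symm.pow_right k)
    obtain ⟨u, v, huv⟩ := hco
    obtain ⟨y, hy⟩ := hdiv_pow a (u • x)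
    refine ⟨y, ?_⟩
    rw [mul_comm, mul_smul, hy]
    calc m • u • x = (u * m + v * (p ^ k : ℕ)) • x := by
          rw [add_smul, mul_smul, mul_smul, natCast_zsmul, natCast_zsmul, hk, smul_zero, add_zero,
            smul_comm]
      _ = x := by rw [huv, one_smul]
  have hdiv_int (n : ℤ) (hn : n ≠ 0) (x : A) : ∃ y, n • y = x := by
    obtain ⟨y, hy⟩ := hdiv_nat n.natAbs (Int.natAbs_ne_zero.mpr hn) x
    rcases Int.natAbs_eq n with h | h
    · exact ⟨y, by rw [h, natCast_zsmul, hy]⟩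
    · exact ⟨-y, by rw [h, neg_smul_neg, natCast_zsmul, hy]⟩
  let : DivisibleBy A ℤ := divisibleByOfSMulRightSurj A ℤ fun hn x ↦ hdiv_int _ hn x
  exact Module.Baer.of_divisible A

/-- A homomorphism on a `p`-primary group is injective if it is so on the `p`-torsion. -/
theorem injective_of_primary {p : ℕ} {A B : Type*} [AddCommGroup A] [AddCommGroup B]
    (tors : ∀ x : A, ∃ k : ℕ, p ^ k • x = 0) (h : A →+ B)
    (inj : ∀ x : A, p • x = 0 → h x = 0 → x = 0) : Function.Injective h := by
  refine (injective_iff_map_eq_zero h).mpr fun x hx ↦ ?_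
  obtain ⟨k, hk⟩ := tors x
  induction k generalizing x with
  | zero => simpa using hk
  | succ k ih =>
    refine inj x (ih (p • x) (by rw [map_nsmul, hx, smul_zero]) ?_) hx
    rwa [← mul_smul, ← pow_succ]

/-- An injective endomorphism of a torsion group with finite `n`-torsion for each `n ≠ 0` is
surjective. -/
theorem surjective_of_injective_of_finite_torsion {A : Type*} [AddCommGroup A]
    (tors : ∀ x : A, ∃ n : ℕ, n ≠ 0 ∧ n • x = 0)
    (fin : ∀ n : ℕ, n ≠ 0 → {x : A | n • x = 0}.Finite)
    (h : A →+ A) (inj : Function.Injective h) : Function.Surjective h := by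
  intro x
  obtain ⟨n, hn, hx⟩ := tors x
  have maps : Set.MapsTo h {x : A | n • x = 0} {x : A | n • x = 0} := fun y hy ↦ by
    rw [Set.mem_ofPred_eq] at hy ⊢
    rw [← map_nsmul, hy, map_zero]
  have : Finite {x : A | n • x = 0} := fin n hn
  obtain ⟨y, hy⟩ := Finite.surjective_of_injective (maps.restrict_inj.mpr inj.injOn) ⟨x, hx⟩
  exact ⟨y, congrArg Subtype.val hy⟩

/-- Two divisible `p`-primary groups with isomorphic `p`-torsion are isomorphic, provided that one
of them has finite torsion subgroups. -/
theorem nonempty_addEquiv_of_torsion {p : ℕ} (hp : p.Prime) {A B V : Type*} [AddCommGroup A]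
    [AddCommGroup B] [AddCommGroup V]
    (torsA : ∀ x : A, ∃ k : ℕ, p ^ k • x = 0) (divA : ∀ x : A, ∃ y, p • y = x)
    (torsB : ∀ x : B, ∃ k : ℕ, p ^ k • x = 0) (divB : ∀ x : B, ∃ y, p • y = x)
    (fin : ∀ n : ℕ, n ≠ 0 → {x : A | n • x = 0}.Finite)
    (i : V →+ A) (hi : Function.Injective i) (hi' : ∀ x : A, p • x = 0 → x ∈ i.range)
    (j : V →+ B) (hj : Function.Injective j) (hj' : ∀ x : B, p • x = 0 → x ∈ j.range) :
    Nonempty (A ≃+ B) := by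
  obtain ⟨φ, hφ⟩ := (baer_of_primary_of_divisible hp torsB divB).extension_property_addMonoidHom
    i hi j
  obtain ⟨ψ, hψ⟩ := (baer_of_primary_of_divisible hp torsA divA).extension_property_addMonoidHom
    j hj i
  have φ_inj : Function.Injective φ := injective_of_primary torsA φ fun x hx h0 ↦ by
    obtain ⟨v, rfl⟩ := hi' x hx
    have : j v = 0 := by rw [← hφ]; exact h0
    rw [(map_eq_zero_iff j hj).mp this, map_zero]
  have ψ_inj : Function.Injective ψ := injective_of_primary torsB ψ fun x hx h0 ↦ by
    obtain ⟨v, rfl⟩ := hj' x hx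
    have : i v = 0 := by rw [← hψ]; exact h0
    rw [(map_eq_zero_iff i hi).mp this, map_zero]
  have surj : Function.Surjective (ψ.comp φ) :=
    surjective_of_injective_of_finite_torsion
      (fun x ↦ (torsA x).imp' _ fun k hk ↦ ⟨pow_ne_zero k hp.ne_zero, hk⟩) fin _
      (ψ_inj.comp φ_inj)
  exact ⟨(AddEquiv.ofBijective ψ ⟨ψ_inj, Function.Surjective.of_comp surj⟩).symm⟩

theorem primaryComponent_isPrimary (p : ℕ) [Fact p.Prime]
    (x : AddCommGroup.primaryComponent QmodZ p) : ∃ k : ℕ, p ^ k • x = 0 := by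
  obtain ⟨k, hk⟩ := AddCommGroup.mem_primaryComponent.mp x.2
  exact ⟨k, Subtype.ext (by simpa using hk)⟩

theorem primaryComponent_divisible (p : ℕ) [Fact p.Prime]
    (x : AddCommGroup.primaryComponent QmodZ p) : ∃ y, p • y = x := by
  obtain ⟨k, hk⟩ := primaryComponent_isPrimary p x
  obtain ⟨q, hq⟩ := QuotientAddGroup.mk_surjective x.1
  have hp : (p : ℚ) ≠ 0 := Nat.cast_ne_zero.mpr (Fact.out : p.Prime).ne_zero
  have hdiv : p • ((q / p : ℚ) : QmodZ) = x.1 := by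
    rw [← hq, ← QuotientAddGroup.mk_nsmul, nsmul_eq_mul, mul_div_cancel₀ _ hp]
  refine ⟨⟨((q / p : ℚ) : QmodZ), AddCommGroup.mem_primaryComponent.mpr ⟨k + 1, ?_⟩⟩,
    Subtype.ext hdiv⟩
  rw [pow_succ, mul_smul, hdiv]
  simpa using congrArg Subtype.val hk

theorem pi_primaryComponent_isPrimary (p : ℕ) [Fact p.Prime] (r : ℕ)
    (x : Fin r → AddCommGroup.primaryComponent QmodZ p) : ∃ k : ℕ, p ^ k • x = 0 := by
  choose k hk using fun i ↦ primaryComponent_isPrimary p (x i)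
  refine ⟨∑ i, k i, funext fun i ↦ ?_⟩
  obtain ⟨d, hd⟩ := pow_dvd_pow p (Finset.single_le_sum (f := k) (fun _ _ ↦ Nat.zero_le _)
    (Finset.mem_univ i))
  rw [Pi.smul_apply, hd, mul_comm, mul_smul, hk, smul_zero, Pi.zero_apply]

theorem pi_primaryComponent_divisible (p : ℕ) [Fact p.Prime] (r : ℕ)
    (x : Fin r → AddCommGroup.primaryComponent QmodZ p) : ∃ y, p • y = x := by
  choose y hy using fun i ↦ primaryComponent_divisible p (x i)
  exact ⟨y, funext hy⟩

theorem primaryComponent_finite_torsion (p : ℕ) [Fact p.Prime] {n : ℕ} (hn : n ≠ 0) :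
    {x : AddCommGroup.primaryComponent QmodZ p | n • x = 0}.Finite := by
  have := AddCircle.finite_torsion (1 : ℚ) (Nat.pos_of_ne_zero hn)
  refine (this.preimage (f := Subtype.val) Subtype.val_injective.injOn).subset fun x hx ↦ ?_
  simpa using congrArg Subtype.val hx

/-- The `p`-torsion of the Prüfer group is cyclic of order `p`. -/
theorem exists_zmod_embedding (p : ℕ) [Fact p.Prime] :
    ∃ i : ZMod p →+ AddCommGroup.primaryComponent QmodZ p, Function.Injective i ∧
      ∀ x, p • x = 0 → x ∈ i.range := by
  have hp : (p : ℚ) ≠ 0 := Nat.cast_ne_zero.mpr (Fact.out : p.Prime).ne_zero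
  have hinv : p • ((1 / p : ℚ) : QmodZ) = 0 := by
    rw [← QuotientAddGroup.mk_nsmul, nsmul_eq_mul, mul_div_cancel₀ _ hp]
    exact (QuotientAddGroup.eq_zero_iff _).mpr (AddSubgroup.mem_zmultiples 1)
  let c : AddCommGroup.primaryComponent QmodZ p :=
    ⟨((1 / p : ℚ) : QmodZ), AddCommGroup.mem_primaryComponent.mpr ⟨1, by rwa [pow_one]⟩⟩
  have hc : p • c = 0 := Subtype.ext hinv
  let i : ZMod p →+ AddCommGroup.primaryComponent QmodZ p :=
    ZMod.lift p ⟨zmultiplesHom _ c, by simpa using hc⟩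
  have hi (m : ℤ) : (i m).1 = ((m / p : ℚ) : QmodZ) := by
    have : i m = m • c := by simp [i]
    rw [this, AddSubgroup.coe_zsmul, ← QuotientAddGroup.mk_zsmul, zsmul_eq_mul, mul_one_div]
  refine ⟨i, (injective_iff_map_eq_zero i).mpr fun z hz ↦ ?_, fun x hx ↦ ?_⟩
  · obtain ⟨m, rfl⟩ := ZMod.intCast_surjective z
    have h0 : ((m / p : ℚ) : QmodZ) = 0 := by rw [← hi, hz]; rfl
    obtain ⟨l, hl⟩ := AddSubgroup.mem_zmultiples_iff.mp ((QuotientAddGroup.eq_zero_iff _).mp h0)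
    rw [zsmul_eq_mul, mul_one, eq_div_iff hp] at hl
    exact (ZMod.intCast_zmod_eq_zero_iff_dvd m p).mpr ⟨l, by rw [mul_comm]; exact_mod_cast hl.symm⟩
  · obtain ⟨q, hq⟩ := QuotientAddGroup.mk_surjective x.1
    have h0 : ((p • q : ℚ) : QmodZ) = 0 := by
      rw [QuotientAddGroup.mk_nsmul, hq]
      simpa using congrArg Subtype.val hx
    obtain ⟨l, hl⟩ := AddSubgroup.mem_zmultiples_iff.mp ((QuotientAddGroup.eq_zero_iff _).mp h0)
    rw [zsmul_eq_mul, mul_one, nsmul_eq_mul] at hl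
    refine ⟨(l : ZMod p), Subtype.ext ?_⟩
    rw [hi, ← hq, hl, mul_div_cancel_left₀ _ hp]

/-- A finite elementary abelian `p`-group is a finite power of `ZMod p`. -/
theorem exists_addEquiv_zmod_of_nsmul_eq_zero (p : ℕ) [Fact p.Prime] {V : Type*} [AddCommGroup V]
    [Finite V] (h : ∀ x : V, p • x = 0) : ∃ r : ℕ, Nonempty (V ≃+ (Fin r → ZMod p)) := by
  obtain ⟨_⟩ : Nonempty (Module (ZMod p) V) := ⟨AddCommGroup.zmodModule h⟩
  exact ⟨_, ⟨(Module.finBasis (ZMod p) V).equivFun.toAddEquiv⟩⟩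

/-- A divisible `p`-primary abelian group with finite torsion subgroups is a finite power of the
Prüfer group. -/
theorem exists_addEquiv_primaryComponent {p : ℕ} [Fact p.Prime] {A : Type*} [AddCommGroup A]
    (tors : ∀ x : A, ∃ k : ℕ, p ^ k • x = 0) (hdiv : ∀ x : A, ∃ y, p • y = x)
    (fin : ∀ n : ℕ, n ≠ 0 → {x : A | n • x = 0}.Finite) :
    ∃ r : ℕ, Nonempty (A ≃+ (Fin r → AddCommGroup.primaryComponent QmodZ p)) := by
  have hp : p.Prime := Fact.out
  have : Finite (nsmulAddMonoidHom (α := A) p).ker := fin p hp.ne_zero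
  obtain ⟨r, ⟨e⟩⟩ := exists_addEquiv_zmod_of_nsmul_eq_zero p
    (V := (nsmulAddMonoidHom (α := A) p).ker) fun x ↦ Subtype.ext x.2
  obtain ⟨j, hj, hj'⟩ := exists_zmod_embedding p
  refine ⟨_, nonempty_addEquiv_of_torsion hp tors hdiv (pi_primaryComponent_isPrimary p _)
    (pi_primaryComponent_divisible p _) fin
    ((AddSubgroup.subtype _).comp e.symm.toAddMonoidHom)
    (Subtype.val_injective.comp e.symm.injective)
    (fun x hx ↦ ⟨e ⟨x, hx⟩, by simp⟩) (j.compLeft _) (fun u v huv ↦ ?_) (fun x hx ↦ ?_)⟩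
  · exact funext fun i ↦ hj (congrFun huv i)
  · choose v hv using fun i ↦ hj' (x i) (congrFun hx i)
    exact ⟨v, funext hv⟩

theorem Prufer.pi_isPGroup (p : ℕ) [Fact p.Prime] (r : ℕ) : IsPGroup p (Fin r → Prufer p) :=
  pi_primaryComponent_isPrimary p r

theorem Prufer.pi_divisible (p : ℕ) [Fact p.Prime] (r : ℕ) (x : Fin r → Prufer p) :
    ∃ y, y ^ p = x :=
  pi_primaryComponent_divisible p r x

theorem Prufer.pi_finite_torsion (p : ℕ) [Fact p.Prime] (r : ℕ) {n : ℕ} (hn : n ≠ 0) :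
    {x : Fin r → Prufer p | x ^ n = 1}.Finite := by
  have h : {x : Prufer p | x ^ n = 1}.Finite := primaryComponent_finite_torsion p hn
  exact (Set.Finite.pi' fun _ : Fin r ↦ h).subset fun x hx i ↦ congrFun hx i

/-- A divisible abelian `p`-group with finite torsion subgroups is a finite power of the Prüfer
group. -/
theorem exists_mulEquiv_prufer_s6 {p : ℕ} [Fact p.Prime] {G : Type*} [CommGroup G]
    (tors : IsPGroup p G) (hdiv : ∀ x : G, ∃ y, y ^ p = x)
    (fin : ∀ n : ℕ, n ≠ 0 → {x : G | x ^ n = 1}.Finite) :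
    ∃ r : ℕ, Nonempty (G ≃* (Fin r → Prufer p)) := by
  obtain ⟨r, ⟨e⟩⟩ := exists_addEquiv_primaryComponent (p := p) (A := Additive G) tors hdiv fin
  exact ⟨r, ⟨{ toEquiv := e.toEquiv, map_mul' := e.map_add }⟩⟩

section DiscretePToral

variable {p : ℕ} [Fact p.Prime] {S : Type*} [CommGroup S]

theorem IsDiscretePToral.isPGroup (hS : IsDiscretePToral p S) : IsPGroup p S := by
  obtain ⟨S₀, _, ⟨r, ⟨e⟩⟩, -, hQ⟩ := hS
  intro x
  obtain ⟨k, hk⟩ := hQ x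
  rw [← QuotientGroup.mk_pow, QuotientGroup.eq_one_iff] at hk
  obtain ⟨l, hl⟩ := (Prufer.pi_isPGroup p r).of_equiv e.symm ⟨_, hk⟩
  exact ⟨k + l, by rw [pow_add, pow_mul]; exact congrArg Subtype.val hl⟩

theorem IsDiscretePToral.finite_torsion (hS : IsDiscretePToral p S) {n : ℕ} (hn : n ≠ 0) :
    {x : S | x ^ n = 1}.Finite := by
  obtain ⟨S₀, _, ⟨r, ⟨e⟩⟩, _, -⟩ := hS
  have fin₀ : {x : S₀ | x ^ n = 1}.Finite :=
    ((Prufer.pi_finite_torsion p r hn).preimage e.injective.injOn).subset fun x hx ↦ by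
      change e x ^ n = 1
      rw [← map_pow, show x ^ n = 1 from hx, map_one]
  refine Set.Finite.of_finite_fibers (QuotientGroup.mk : S → S ⧸ S₀) (Set.toFinite _) ?_
  rintro _ ⟨x, hx, rfl⟩
  refine (fin₀.image fun y : S₀ ↦ x * y).subset ?_
  rintro y ⟨hy, hxy⟩
  refine ⟨⟨x⁻¹ * y, QuotientGroup.eq.mp (Eq.symm hxy)⟩, Subtype.ext ?_, mul_inv_cancel_left x y⟩
  change (x⁻¹ * y) ^ n = 1
  rw [mul_pow, inv_pow, show x ^ n = 1 from hx, show y ^ n = 1 from hy, inv_one, one_mul]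

/-- The elements killed by a power of a surjective endomorphism of an abelian discrete `p`-toral
group have `p`-th roots. -/
theorem IsDiscretePToral.exists_pow_eq_of_iterate_eq_one (hS : IsDiscretePToral p S) (f : S →* S)
    (hf : Function.Surjective f) {n : ℕ} {x : S} (hx : f^[n] x = 1) : ∃ y, y ^ p = x := by
  obtain ⟨S₀, _, ⟨r, ⟨e⟩⟩, _, hQ⟩ := hS
  have hdiv (x : S) (h : x ∈ S₀) : ∃ y ∈ S₀, y ^ p = x := by
    obtain ⟨y, hy⟩ := Prufer.pi_divisible p r (e ⟨x, h⟩)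
    refine ⟨e.symm y, (e.symm y).2, ?_⟩
    rw [← Subgroup.coe_pow, ← map_pow, hy, e.symm_apply_apply]
  have hdiv_pow (a : ℕ) : ∀ x ∈ S₀, ∃ y ∈ S₀, y ^ p ^ a = x := by
    induction a with
    | zero => exact fun x h ↦ ⟨x, h, by simp⟩
    | succ a ih =>
      intro x h
      obtain ⟨y, hy, rfl⟩ := hdiv x h
      obtain ⟨z, hz, rfl⟩ := ih y hy
      exact ⟨z, hz, by rw [pow_succ, pow_mul]⟩
  have maps : S₀ ≤ S₀.comap f := by
    intro x h
    obtain ⟨a, ha⟩ := hQ.exists_card_eq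
    obtain ⟨y, -, rfl⟩ := hdiv_pow a x h
    rw [Subgroup.mem_comap, map_pow, ← ha]
    exact (QuotientGroup.eq_one_iff _).mp (by rw [QuotientGroup.mk_pow, pow_card_eq_one'])
  have surj : Function.Surjective (QuotientGroup.map S₀ S₀ f maps) := by
    rintro ⟨y⟩
    obtain ⟨x, rfl⟩ := hf y
    exact ⟨x, rfl⟩
  have inj := Finite.injective_iff_surjective.mpr surj
  have mem (x : S) (h : f x ∈ S₀) : x ∈ S₀ := by
    rw [← QuotientGroup.eq_one_iff] at h ⊢
    exact (map_eq_one_iff _ inj).mp h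
  have mem_iterate : x ∈ S₀ := by
    induction n generalizing x with
    | zero => exact (show x = 1 from hx) ▸ S₀.one_mem
    | succ n ih => exact mem x (ih hx)
  obtain ⟨y, -, hy⟩ := hdiv x mem_iterate
  exact ⟨y, hy⟩

end DiscretePToral

/-- The subgroup of periodic points of an endomorphism of an abelian group. -/
def periodicSubgroup {S : Type*} [CommGroup S] (f : S →* S) : Subgroup S where
  carrier := Function.periodicPts f
  one_mem' := ⟨1, one_pos, map_one f⟩
  mul_mem' := by
    rintro x y ⟨m, hm, hx⟩ ⟨n, hn, hy⟩
    refine ⟨m * n, Nat.mul_pos hm hn, ?_⟩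
    rw [Function.IsPeriodicPt, Function.IsFixedPt, iterate_map_mul, (hx.mul_const n).eq,
      (hy.const_mul m).eq]
  inv_mem' := by
    rintro x ⟨m, hm, hx⟩
    exact ⟨m, hm, by rw [Function.IsPeriodicPt, Function.IsFixedPt, iterate_map_inv, hx.eq]⟩

/-- The subgroup of elements killed by some iterate of an endomorphism of an abelian group. -/
def locallyNilpotentSubgroup {S : Type*} [CommGroup S] (f : S →* S) : Subgroup S where
  carrier := {x | ∃ n : ℕ, 1 ≤ n ∧ f^[n] x = 1}
  one_mem' := ⟨1, le_rfl, map_one f⟩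
  mul_mem' := by
    rintro x y ⟨m, hm, hx⟩ ⟨n, hn, hy⟩
    refine ⟨m + n, by omega, ?_⟩
    rw [iterate_map_mul, Function.iterate_add_apply _ m n y, hy, Nat.add_comm,
      Function.iterate_add_apply, hx, iterate_map_one, iterate_map_one, one_mul]
  inv_mem' := by
    rintro x ⟨m, hm, hx⟩
    exact ⟨m, hm, by rw [iterate_map_inv, hx, inv_one]⟩

section Fitting

variable {S : Type*} [CommGroup S] (f : S →* S)

theorem periodicSubgroup_inf_locallyNilpotentSubgroup :
    periodicSubgroup f ⊓ locallyNilpotentSubgroup f = ⊥ := by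
  rw [eq_bot_iff]
  rintro x ⟨⟨m, hm, hx⟩, n, hn, hy⟩
  obtain ⟨k, hk⟩ := Nat.exists_eq_add_of_le (Nat.le_mul_of_pos_left n hm)
  have h := (hx.mul_const n).eq
  rw [hk, Nat.add_comm, Function.iterate_add_apply, hy, iterate_map_one] at h
  exact h.symm

/-- A point of a finite set invariant under `g` has, for some `n`, an `n`-th iterate of period `n`. -/
theorem exists_iterate_isPeriodicPt {α : Type*} (g : α → α) {F : Set α} (hF : F.Finite)
    (maps : Set.MapsTo g F F) {x : α} (hx : x ∈ F) :
    ∃ n, 1 ≤ n ∧ Function.IsPeriodicPt g n (g^[n] x) := by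
  obtain ⟨a, -, b, -, hab, h⟩ := Set.infinite_univ.exists_lt_map_eq_of_mapsTo
    (f := fun k ↦ g^[k] x) (fun k _ ↦ maps.iterate k hx) hF
  have hper : Function.IsPeriodicPt g (b - a) (g^[a] x) := by
    rw [Function.IsPeriodicPt, Function.IsFixedPt, ← Function.iterate_add_apply,
      Nat.sub_add_cancel hab.le]
    exact h.symm
  have hle : b ≤ (b - a) * b := Nat.le_mul_of_pos_left b (by omega)
  refine ⟨(b - a) * b, by omega, ?_⟩
  have hsplit : g^[(b - a) * b] x = g^[(b - a) * b - a] (g^[a] x) := by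
    rw [← Function.iterate_add_apply, Nat.sub_add_cancel (by omega)]
  rw [hsplit]
  exact (hper.apply_iterate _).mul_const b

variable {f}

theorem periodicSubgroup_sup_locallyNilpotentSubgroup
    (hfin : ∀ x, ∃ n, 1 ≤ n ∧ Function.IsPeriodicPt f n (f^[n] x)) :
    periodicSubgroup f ⊔ locallyNilpotentSubgroup f = ⊤ := by
  refine eq_top_iff.mpr fun x _ ↦ ?_
  obtain ⟨n, hn, hx⟩ := hfin x
  refine Subgroup.mem_sup.mpr ⟨f^[n] x, ⟨n, hn, hx⟩, (f^[n] x)⁻¹ * x, ⟨n, hn, ?_⟩, by simp⟩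
  rw [iterate_map_mul, iterate_map_inv, hx.eq, inv_mul_cancel]

theorem le_periodicSubgroup (hfin : ∀ x, ∃ n, 1 ≤ n ∧ Function.IsPeriodicPt f n (f^[n] x))
    {T : Subgroup S} (hT : Set.BijOn f (T : Set S) (T : Set S)) : T ≤ periodicSubgroup f := by
  intro x hx
  obtain ⟨n, hn, h⟩ := hfin x
  exact ⟨n, hn, hT.injOn.iterate hT.mapsTo n (hT.mapsTo.iterate n hx) hx h⟩

end Fitting

theorem Subgroup.eq_of_le_of_le_of_inf_eq_bot_of_sup_eq_top {S : Type*} [CommGroup S]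
    {T T' U U' : Subgroup S} (hT : T' ≤ T) (hU : U' ≤ U) (hinf : T ⊓ U = ⊥)
    (hsup : T' ⊔ U' = ⊤) : T' = T ∧ U' = U := by
  constructor
  · refine eq_of_le_of_inf_le_of_le_sup hT (z := U) ?_ ?_
    · rw [hinf]; exact bot_le
    · exact le_top.trans (hsup.ge.trans (sup_le_sup_left hU _))
  · refine eq_of_le_of_inf_le_of_le_sup hU (z := T) ?_ ?_
    · rw [inf_comm, hinf]; exact bot_le
    · rw [sup_comm]; exact le_top.trans (hsup.ge.trans (sup_le_sup_right hT _))

/-- Let `S` be an abelian discrete `p`-toral group and `f : S → S` a surjective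
endomorphism. Then there is a unique pair of subgroups `(T, U)` with `S = T × U`,
`f` restricting to an automorphism of `T`, `U` connected, and `f` restricting to a
locally nilpotent endomorphism of `U`. -/
theorem exists_unique_decomposition_of_surjective_endomorphism
    (p : ℕ) [Fact p.Prime] (S : Type*) [CommGroup S]
    (hS : IsDiscretePToral p S) (f : S →* S) (hf : Function.Surjective f) :
    ∃! TU : Subgroup S × Subgroup S,
      TU.1 ⊓ TU.2 = ⊥ ∧ TU.1 ⊔ TU.2 = ⊤ ∧
      Set.BijOn f (TU.1 : Set S) (TU.1 : Set S) ∧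
      (∃ r : ℕ, Nonempty (TU.2 ≃* (Fin r → Prufer p))) ∧
      Set.MapsTo f (TU.2 : Set S) (TU.2 : Set S) ∧
      (∀ x ∈ TU.2, ∃ n : ℕ, 1 ≤ n ∧ (⇑f)^[n] x = 1) := by
  have fin (x : S) : ∃ n, 1 ≤ n ∧ Function.IsPeriodicPt f n (f^[n] x) := by
    obtain ⟨k, hk⟩ := hS.isPGroup x
    refine exists_iterate_isPeriodicPt f
      (hS.finite_torsion (pow_ne_zero k (Fact.out : p.Prime).ne_zero)) (fun y hy ↦ ?_) hk
    change f y ^ p ^ k = 1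
    rw [← map_pow, show y ^ p ^ k = 1 from hy, map_one]
  have inf := periodicSubgroup_inf_locallyNilpotentSubgroup f
  have sup := periodicSubgroup_sup_locallyNilpotentSubgroup fin
  refine ⟨(periodicSubgroup f, locallyNilpotentSubgroup f),
    ⟨inf, sup, Function.bijOn_periodicPts f,
      exists_mulEquiv_prufer_s6 (hS.isPGroup.to_subgroup _) ?_ ?_,
      ?_, fun x hx ↦ hx⟩, ?_⟩
  · rintro ⟨x, n, hn, hx⟩
    obtain ⟨y, rfl⟩ := hS.exists_pow_eq_of_iterate_eq_one f hf hx
    obtain ⟨t, ht, u, hu, rfl⟩ := Subgroup.mem_sup.mp (sup.ge (Subgroup.mem_top y))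
    have htp : t ^ p = 1 := by
      refine (Subgroup.eq_bot_iff_forall _).mp inf _ ⟨Subgroup.pow_mem _ ht p, ?_⟩
      have h : (t * u) ^ p ∈ locallyNilpotentSubgroup f := ⟨n, hn, hx⟩
      rw [mul_pow] at h
      exact (Subgroup.mul_mem_cancel_right _ (Subgroup.pow_mem _ hu p)).mp h
    exact ⟨⟨u, hu⟩, Subtype.ext (by simp [mul_pow, htp])⟩
  · intro n hn
    refine ((hS.finite_torsion hn).preimage Subtype.val_injective.injOn).subset fun x hx ↦ ?_
    exact congrArg Subtype.val hx
  · rintro x ⟨n, hn, hx⟩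
    exact ⟨n, hn, by rw [← Function.iterate_succ_apply, Function.iterate_succ_apply', hx, map_one]⟩
  · rintro ⟨T, U⟩ ⟨-, hsup, hT, -, -, hU⟩
    obtain ⟨rfl, rfl⟩ := Subgroup.eq_of_le_of_le_of_inf_eq_bot_of_sup_eq_top
      (le_periodicSubgroup fin hT) (show U ≤ locallyNilpotentSubgroup f from hU) inf hsup
    rfl
end
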